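/- arXiv:2305.17857 — 2 statements merged into one kernel-verified Lean document; each statement's English description precedes it below -/
import Mathlib

section
/- Let ψ ∈ C_c^∞(ℝ²) and define φ ∈ C_c^∞(ℝ) by φ(x₁) := ψ(x₁,0). Then the derivative at 0 of the Hilbert transform of φ, namely Hφ'(0) = lim_{ε→0⁺} (1/π) ∫_{|t| ≥ ε} φ'(−t)/t dt, satisfies Hφ'(0) = −(1/4π) ∫_{S¹} |sin θ| · T(Δψ)(0,θ) dθ, where Δ = ∂_{x₁}² + ∂_{x₂}² is the Laplacian on ℝ². -/
open MeasureTheory Real Filter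

noncomputable section

/-- Directional derivative of a function on `ℝ²` in the direction `v`. -/
def pd (v : ℝ × ℝ) (ψ : ℝ × ℝ → ℝ) : ℝ × ℝ → ℝ := fun p => fderiv ℝ ψ p v

/-- The Laplacian `Δ = ∂_{x₁}² + ∂_{x₂}²` on `ℝ²`. -/
def lap (ψ : ℝ × ℝ → ℝ) : ℝ × ℝ → ℝ := fun p =>
  pd (1, 0) (pd (1, 0) ψ) p + pd (0, 1) (pd (0, 1) ψ) p

/-- The X-ray transform `Tψ(s,θ)`. -/
def xray (ψ : ℝ × ℝ → ℝ) (s θ : ℝ) : ℝ :=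
  ∫ t : ℝ, ψ (t * Real.cos θ - s * Real.sin θ, t * Real.sin θ + s * Real.cos θ)

lemma ContDiff.pd {ψ : ℝ × ℝ → ℝ} (hψ : ContDiff ℝ (⊤ : ℕ∞) ψ) (v : ℝ × ℝ) :
    ContDiff ℝ (⊤ : ℕ∞) (pd v ψ) :=
  (hψ.fderiv_right (m := (⊤ : ℕ∞)) (by simp)).clm_apply contDiff_const

lemma ContDiff.lap {ψ : ℝ × ℝ → ℝ} (hψ : ContDiff ℝ (⊤ : ℕ∞) ψ) :
    ContDiff ℝ (⊤ : ℕ∞) (lap ψ) :=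
  ((hψ.pd _).pd _).add ((hψ.pd _).pd _)

lemma HasCompactSupport.pd {ψ : ℝ × ℝ → ℝ} (hψ : HasCompactSupport ψ) (v : ℝ × ℝ) :
    HasCompactSupport (pd v ψ) :=
  hψ.fderiv_apply ℝ v

lemma HasCompactSupport.lap {ψ : ℝ × ℝ → ℝ} (hψ : HasCompactSupport ψ) :
    HasCompactSupport (lap ψ) :=
  ((hψ.pd _).pd _).add ((hψ.pd _).pd _)

/-- Chain rule along a curve in `ℝ²`. -/
lemma hasDerivAt_comp_curve {F : ℝ × ℝ → ℝ} (hF : ContDiff ℝ (⊤ : ℕ∞) F) {x y : ℝ → ℝ}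
    {x' y' t : ℝ} (hx : HasDerivAt x x' t) (hy : HasDerivAt y y' t) :
    HasDerivAt (fun s => F (x s, y s))
      (pd (1, 0) F (x t, y t) * x' + pd (0, 1) F (x t, y t) * y') t := by
  have hd : HasFDerivAt F (fderiv ℝ F (x t, y t)) (x t, y t) :=
    (hF.differentiable (by simp) _).hasFDerivAt
  refine (hd.comp_hasDerivAt t (hx.prodMk hy)).congr_deriv ?_
  have hv : ((x', y') : ℝ × ℝ) = x' • (1, 0) + y' • (0, 1) := by simp
  rw [hv, map_add, map_smul, map_smul]
  simp [pd, mul_comm]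

lemma eventually_polar_eq_zero {F : ℝ × ℝ → ℝ} (hF : HasCompactSupport F) :
    ∀ᶠ R in atTop, ∀ t θ : ℝ, R ≤ |t| → F (t * cos θ, t * sin θ) = 0 := by
  obtain ⟨M, hM⟩ := hF.isCompact.isBounded.subset_closedBall 0
  filter_upwards [eventually_gt_atTop (2 * |M|)] with R hR t θ ht
  by_contra hne
  have hmem := hM (subset_tsupport F hne)
  rw [mem_closedBall_zero_iff, Prod.norm_mk, sup_le_iff, Real.norm_eq_abs, Real.norm_eq_abs] at hmem
  have hMM := le_abs_self M
  have h1 := sq_le_sq' (abs_le.1 (hmem.1.trans hMM)).1 (abs_le.1 (hmem.1.trans hMM)).2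
  have h2 := sq_le_sq' (abs_le.1 (hmem.2.trans hMM)).1 (abs_le.1 (hmem.2.trans hMM)).2
  have h3 : t ^ 2 ≤ 2 * |M| ^ 2 := by nlinarith [sin_sq_add_cos_sq θ]
  nlinarith [sq_abs t, abs_nonneg M, abs_nonneg t]

/-- The radial derivative of `ψ` at `(r cos θ, r sin θ)`. -/
def radialDeriv (ψ : ℝ × ℝ → ℝ) (r θ : ℝ) : ℝ :=
  pd (1, 0) ψ (r * cos θ, r * sin θ) * cos θ + pd (0, 1) ψ (r * cos θ, r * sin θ) * sin θ

/-- The angular derivative of `ψ` at `(r cos θ, r sin θ)`. -/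
def angularDeriv (ψ : ℝ × ℝ → ℝ) (r θ : ℝ) : ℝ :=
  pd (1, 0) ψ (r * cos θ, r * sin θ) * (r * -sin θ) +
    pd (0, 1) ψ (r * cos θ, r * sin θ) * (r * cos θ)

/-- The second radial derivative of `ψ` at `(r cos θ, r sin θ)`. -/
def radialDerivTwo (ψ : ℝ × ℝ → ℝ) (r θ : ℝ) : ℝ :=
  radialDeriv (pd (1, 0) ψ) r θ * cos θ + radialDeriv (pd (0, 1) ψ) r θ * sin θ

lemma hasDerivAt_radial {ψ : ℝ × ℝ → ℝ} (hψ : ContDiff ℝ (⊤ : ℕ∞) ψ) (r θ : ℝ) :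
    HasDerivAt (fun r => ψ (r * cos θ, r * sin θ)) (radialDeriv ψ r θ) r := by
  simpa [radialDeriv] using hasDerivAt_comp_curve hψ ((hasDerivAt_id r).mul_const (cos θ))
    ((hasDerivAt_id r).mul_const (sin θ))

lemma hasDerivAt_angular {ψ : ℝ × ℝ → ℝ} (hψ : ContDiff ℝ (⊤ : ℕ∞) ψ) (r θ : ℝ) :
    HasDerivAt (fun θ => ψ (r * cos θ, r * sin θ)) (angularDeriv ψ r θ) θ := by
  simpa only [angularDeriv] using hasDerivAt_comp_curve hψ ((hasDerivAt_cos θ).const_mul r)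
    ((hasDerivAt_sin θ).const_mul r)

lemma hasDerivAt_horizontal {ψ : ℝ × ℝ → ℝ} (hψ : ContDiff ℝ (⊤ : ℕ∞) ψ) (r : ℝ) :
    HasDerivAt (fun r => ψ (r, 0)) (pd (1, 0) ψ (r, 0)) r := by
  simpa using hasDerivAt_comp_curve hψ (hasDerivAt_id r) (hasDerivAt_const r (0 : ℝ))

lemma continuous_radialDeriv {ψ : ℝ × ℝ → ℝ} (hψ : ContDiff ℝ (⊤ : ℕ∞) ψ) :
    Continuous fun p : ℝ × ℝ => radialDeriv ψ p.1 p.2 := by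
  have h1 := (hψ.pd (1, 0)).continuous
  have h2 := (hψ.pd (0, 1)).continuous
  unfold radialDeriv
  fun_prop

lemma continuous_radialDerivTwo {ψ : ℝ × ℝ → ℝ} (hψ : ContDiff ℝ (⊤ : ℕ∞) ψ) :
    Continuous fun p : ℝ × ℝ => radialDerivTwo ψ p.1 p.2 := by
  have h1 := continuous_radialDeriv (hψ.pd (1, 0))
  have h2 := continuous_radialDeriv (hψ.pd (0, 1))
  unfold radialDerivTwo
  fun_prop

/-- The mean of `f` over the upper half of the circle of radius `r`, weighted by `sin θ`. -/
def sinMean (f : ℝ × ℝ → ℝ) (r : ℝ) : ℝ :=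
  ∫ θ in (0 : ℝ)..π, sin θ * f (r * cos θ, r * sin θ)

/-- The radial part of the boundary terms in the integration by parts in polar coordinates. -/
def radialFlux (ψ : ℝ × ℝ → ℝ) (r θ : ℝ) : ℝ :=
  sin θ * (radialDeriv ψ r θ + ψ (r * cos θ, r * sin θ) / r)

/-- The radial derivative of `radialFlux`. -/
def radialFluxDeriv (ψ : ℝ × ℝ → ℝ) (r θ : ℝ) : ℝ :=
  sin θ * (radialDerivTwo ψ r θ +
    (radialDeriv ψ r θ * r - ψ (r * cos θ, r * sin θ)) / r ^ 2)

/-- All boundary terms in the integration by parts in polar coordinates. -/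
def boundaryTerm (ψ : ℝ × ℝ → ℝ) (r : ℝ) : ℝ :=
  (∫ θ in (0 : ℝ)..π, radialFlux ψ r θ) - (ψ (r, 0) + ψ (-r, 0)) / r

lemma hasDerivAt_radialFlux {ψ : ℝ × ℝ → ℝ} (hψ : ContDiff ℝ (⊤ : ℕ∞) ψ) {r : ℝ} (hr : r ≠ 0)
    (θ : ℝ) : HasDerivAt (fun r => radialFlux ψ r θ) (radialFluxDeriv ψ r θ) r := by
  have h1 : HasDerivAt (fun r => radialDeriv ψ r θ) (radialDerivTwo ψ r θ) r :=
    ((hasDerivAt_radial (hψ.pd (1, 0)) r θ).mul_const (cos θ)).add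
      ((hasDerivAt_radial (hψ.pd (0, 1)) r θ).mul_const (sin θ))
  have h2 := (hasDerivAt_radial hψ r θ).div (hasDerivAt_id r) hr
  simpa [radialFlux, radialFluxDeriv] using (h1.add h2).const_mul (sin θ)

lemma continuousOn_radialFluxDeriv {ψ : ℝ × ℝ → ℝ} (hψ : ContDiff ℝ (⊤ : ℕ∞) ψ) :
    ContinuousOn (fun p : ℝ × ℝ => radialFluxDeriv ψ p.1 p.2) {p | p.1 ≠ 0} := by
  have h0 := hψ.continuous
  have h1 := continuous_radialDeriv hψ
  have h2 := continuous_radialDerivTwo hψ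
  unfold radialFluxDeriv
  refine ContinuousOn.mul (by fun_prop) (ContinuousOn.add h2.continuousOn
    (ContinuousOn.div (by fun_prop) (by fun_prop) fun p hp => pow_ne_zero _ hp))

/-- The Laplacian in polar coordinates, integrated against `sin θ` over the upper half circle. -/
lemma sinMean_lap {ψ : ℝ × ℝ → ℝ} (hψ : ContDiff ℝ (⊤ : ℕ∞) ψ) {r : ℝ} (hr : r ≠ 0) :
    sinMean (lap ψ) r =
      (∫ θ in (0 : ℝ)..π, radialFluxDeriv ψ r θ) + (ψ (r, 0) + ψ (-r, 0)) / r ^ 2 := by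
  have hlap := hψ.lap.continuous
  have hder : ∀ θ ∈ Set.uIcc 0 π, HasDerivAt
      (fun θ => (sin θ * angularDeriv ψ r θ - cos θ * ψ (r * cos θ, r * sin θ)) / r ^ 2)
      (sin θ * lap ψ (r * cos θ, r * sin θ) - radialFluxDeriv ψ r θ) θ := by
    intro θ _
    have h1 : HasDerivAt (fun θ => angularDeriv ψ r θ) _ θ :=
      ((hasDerivAt_angular (hψ.pd (1, 0)) r θ).mul ((hasDerivAt_sin θ).neg.const_mul r)).add
        ((hasDerivAt_angular (hψ.pd (0, 1)) r θ).mul ((hasDerivAt_cos θ).const_mul r))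
    have h2 := (((hasDerivAt_sin θ).mul h1).sub
      ((hasDerivAt_cos θ).mul (hasDerivAt_angular hψ r θ))).div_const (r ^ 2)
    refine h2.congr_deriv ?_
    simp only [radialFluxDeriv, radialDerivTwo, radialDeriv, angularDeriv, lap, Pi.neg_apply]
    field_simp
    rw [← sub_eq_zero]
    have hs : sin θ ^ 2 = 1 - cos θ ^ 2 := sin_sq θ
    ring_nf
    simp only [show sin θ ^ 3 = sin θ * sin θ ^ 2 by ring, hs]
    ring
  have hcf : Continuous fun θ => radialFluxDeriv ψ r θ :=
    (continuousOn_radialFluxDeriv hψ).comp_continuous (f := fun θ : ℝ => (r, θ)) (by fun_prop)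
      fun _ => hr
  have hcl : Continuous fun θ => sin θ * lap ψ (r * cos θ, r * sin θ) := by fun_prop
  have h := intervalIntegral.integral_eq_sub_of_hasDerivAt hder
    ((hcl.sub hcf).intervalIntegrable _ _)
  rw [intervalIntegral.integral_sub (hcl.intervalIntegrable _ _) (hcf.intervalIntegrable _ _)] at h
  rw [sinMean, eq_add_of_sub_eq' h]
  simp
  ring

lemma continuous_sinMean {f : ℝ × ℝ → ℝ} (hf : Continuous f) : Continuous (sinMean f) :=
  intervalIntegral.continuous_parametric_intervalIntegral_of_continuous'
    (f := fun r θ => sin θ * f (r * cos θ, r * sin θ)) (by unfold Function.uncurry; fun_prop) 0 π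

/-- Integration by parts in polar coordinates over the half annulus. -/
lemma integral_sinMean_lap {ψ : ℝ × ℝ → ℝ} (hψ : ContDiff ℝ (⊤ : ℕ∞) ψ) {a b : ℝ}
    (hab : (0 : ℝ) ∉ Set.uIcc a b) :
    ∫ r in a..b, sinMean (lap ψ) r = boundaryTerm ψ b - boundaryTerm ψ a +
      ∫ r in a..b, (pd (1, 0) ψ (r, 0) - pd (1, 0) ψ (-r, 0)) / r := by
  have hne : ∀ r ∈ Set.uIcc a b, r ≠ 0 := fun r hr h => hab (h ▸ hr)
  have h0 := hψ.continuous
  have h1 := (hψ.pd (1, 0)).continuous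
  have hflux : ContinuousOn (fun p : ℝ × ℝ => radialFluxDeriv ψ p.1 p.2)
      (Set.uIcc a b ×ˢ Set.uIcc 0 π) :=
    (continuousOn_radialFluxDeriv hψ).mono fun p hp => hne _ hp.1
  have hswap : ∫ r in a..b, ∫ θ in (0 : ℝ)..π, radialFluxDeriv ψ r θ =
      ∫ θ in (0 : ℝ)..π, (radialFlux ψ b θ - radialFlux ψ a θ) := by
    rw [intervalIntegral_intervalIntegral_swap]
    · refine intervalIntegral.integral_congr fun θ hθ => ?_
      refine intervalIntegral.integral_eq_sub_of_hasDerivAt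
        (fun r hr => hasDerivAt_radialFlux hψ (hne r hr) θ) (ContinuousOn.intervalIntegrable ?_)
      exact hflux.comp (f := fun r : ℝ => (r, θ)) (by fun_prop) fun r hr => ⟨hr, hθ⟩
    · exact (hflux.integrableOn_compact (isCompact_uIcc.prod isCompact_uIcc)).mono_set
        (Set.prod_mono Set.uIoc_subset_uIcc Set.uIoc_subset_uIcc)
  have hcflux : ∀ r, Continuous fun θ => radialFlux ψ r θ := by
    intro r
    have : Continuous fun θ => radialDeriv ψ r θ :=
      (continuous_radialDeriv hψ).comp (f := fun θ : ℝ => (r, θ)) (by fun_prop)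
    unfold radialFlux
    fun_prop
  have hsym : ∀ r ∈ Set.uIcc a b, HasDerivAt (fun r => -((ψ (r, 0) + ψ (-r, 0)) / r))
      ((ψ (r, 0) + ψ (-r, 0)) / r ^ 2 - (pd (1, 0) ψ (r, 0) - pd (1, 0) ψ (-r, 0)) / r) r := by
    intro r hr
    have hr0 := hne r hr
    have hd := (((hasDerivAt_horizontal hψ r).add ((hasDerivAt_horizontal hψ (-r)).comp r
      (hasDerivAt_neg r))).div (hasDerivAt_id r) hr0).neg
    refine hd.congr_deriv ?_
    simp
    field_simp
    ring
  have hc1 : ContinuousOn (fun r => (ψ (r, 0) + ψ (-r, 0)) / r ^ 2) (Set.uIcc a b) :=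
    ContinuousOn.div (by fun_prop) (by fun_prop) fun r hr => pow_ne_zero _ (hne r hr)
  have hc2 : ContinuousOn (fun r => (pd (1, 0) ψ (r, 0) - pd (1, 0) ψ (-r, 0)) / r)
      (Set.uIcc a b) :=
    ContinuousOn.div (by fun_prop) (by fun_prop) hne
  have hint := intervalIntegral.integral_eq_sub_of_hasDerivAt hsym
    (hc1.sub hc2).intervalIntegrable
  rw [intervalIntegral.integral_sub hc1.intervalIntegrable hc2.intervalIntegrable] at hint
  have hsplit : ∫ r in a..b, sinMean (lap ψ) r =
      (∫ r in a..b, ∫ θ in (0 : ℝ)..π, radialFluxDeriv ψ r θ) +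
        ∫ r in a..b, (ψ (r, 0) + ψ (-r, 0)) / r ^ 2 := by
    rw [← sub_eq_iff_eq_add, ← intervalIntegral.integral_sub
      ((continuous_sinMean hψ.lap.continuous).intervalIntegrable _ _) hc1.intervalIntegrable]
    refine intervalIntegral.integral_congr fun r hr => ?_
    simp only [sinMean_lap hψ (hne r hr), add_sub_cancel_right]
  rw [hsplit, hswap, intervalIntegral.integral_sub ((hcflux b).intervalIntegrable _ _)
    ((hcflux a).intervalIntegrable _ _), sub_eq_iff_eq_add.1 hint, boundaryTerm, boundaryTerm]
  ring

lemma boundaryTerm_eq {ψ : ℝ × ℝ → ℝ} (hψ : ContDiff ℝ (⊤ : ℕ∞) ψ) (r : ℝ) :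
    boundaryTerm ψ r = (∫ θ in (0 : ℝ)..π, sin θ * radialDeriv ψ r θ) +
      (∫ θ in (0 : ℝ)..π, sin θ * (r⁻¹ * (ψ (r * cos θ, r * sin θ) - ψ (0, 0)))) -
      (r⁻¹ * (ψ (r, 0) - ψ (0, 0)) + r⁻¹ * (ψ (-r, 0) - ψ (0, 0))) := by
  have h0 := hψ.continuous
  have h1 : Continuous fun θ => radialDeriv ψ r θ :=
    (continuous_radialDeriv hψ).comp (f := fun θ : ℝ => (r, θ)) (by fun_prop)
  have hi : ∀ {f : ℝ → ℝ}, Continuous f → IntervalIntegrable f volume 0 π :=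
    fun hf => hf.intervalIntegrable _ _
  have hsin : ∫ θ in (0 : ℝ)..π, sin θ * (r⁻¹ * ψ (0, 0)) = 2 * (r⁻¹ * ψ (0, 0)) := by
    rw [intervalIntegral.integral_mul_const, integral_sin]
    norm_num
  have hflux : ∫ θ in (0 : ℝ)..π, radialFlux ψ r θ =
      (∫ θ in (0 : ℝ)..π, sin θ * radialDeriv ψ r θ) +
      (∫ θ in (0 : ℝ)..π, sin θ * (r⁻¹ * (ψ (r * cos θ, r * sin θ) - ψ (0, 0)))) +
      ∫ θ in (0 : ℝ)..π, sin θ * (r⁻¹ * ψ (0, 0)) := by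
    rw [← intervalIntegral.integral_add (hi (by fun_prop)) (hi (by fun_prop)),
      ← intervalIntegral.integral_add (hi (by fun_prop)) (hi (by fun_prop))]
    refine intervalIntegral.integral_congr fun θ _ => ?_
    simp only [radialFlux]
    ring
  rw [boundaryTerm, hflux, hsin]
  ring

lemma exists_tendsto_boundaryTerm {ψ : ℝ × ℝ → ℝ} (hψ : ContDiff ℝ (⊤ : ℕ∞) ψ)
    (hsupp : HasCompactSupport ψ) :
    ∃ L, Tendsto (boundaryTerm ψ) (nhdsWithin 0 {0}ᶜ) (nhds L) := by
  have h0 := hψ.continuous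
  obtain ⟨C, hC⟩ := hψ.lipschitzWith_of_hasCompactSupport hsupp (by simp)
  have hrad : Tendsto (fun r => ∫ θ in (0 : ℝ)..π, sin θ * radialDeriv ψ r θ)
      (nhdsWithin 0 {0}ᶜ) (nhds (∫ θ in (0 : ℝ)..π, sin θ * radialDeriv ψ 0 θ)) := by
    have hc : Continuous fun r => ∫ θ in (0 : ℝ)..π, sin θ * radialDeriv ψ r θ :=
      intervalIntegral.continuous_parametric_intervalIntegral_of_continuous'
        (f := fun r θ => sin θ * radialDeriv ψ r θ)
        ((continuous_sin.comp continuous_snd).mul (continuous_radialDeriv hψ)) 0 π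
    exact hc.continuousAt.tendsto.mono_left nhdsWithin_le_nhds
  have hslope : Tendsto (fun r => ∫ θ in (0 : ℝ)..π,
      sin θ * (r⁻¹ * (ψ (r * cos θ, r * sin θ) - ψ (0, 0))))
      (nhdsWithin 0 {0}ᶜ) (nhds (∫ θ in (0 : ℝ)..π, sin θ * radialDeriv ψ 0 θ)) := by
    refine intervalIntegral.tendsto_integral_filter_of_dominated_convergence
      (fun _ => (C : ℝ)) ?_ ?_ intervalIntegrable_const ?_
    · exact Eventually.of_forall fun r => Continuous.aestronglyMeasurable (by fun_prop)
    · filter_upwards [self_mem_nhdsWithin] with r hr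
      refine Eventually.of_forall fun θ _ => ?_
      have hr' : 0 < |r| := abs_pos.2 hr
      have hle : |ψ (r * cos θ, r * sin θ) - ψ (0, 0)| ≤ C * |r| := by
        refine (hC.norm_sub_le _ _).trans (mul_le_mul_of_nonneg_left ?_ C.2)
        simp only [Prod.mk_sub_mk, sub_zero, Prod.norm_mk, norm_mul, Real.norm_eq_abs]
        exact sup_le (mul_le_of_le_one_right hr'.le (abs_cos_le_one θ))
          (mul_le_of_le_one_right hr'.le (abs_sin_le_one θ))
      rw [norm_mul, norm_mul, norm_inv, Real.norm_eq_abs, Real.norm_eq_abs, Real.norm_eq_abs]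
      refine (mul_le_of_le_one_left (by positivity) (abs_sin_le_one θ)).trans ?_
      rw [inv_mul_le_iff₀ hr']
      linarith
    · refine Eventually.of_forall fun θ _ => ?_
      simpa using ((hasDerivAt_radial hψ 0 θ).tendsto_slope_zero).const_mul (sin θ)
  have hpos := (hasDerivAt_horizontal hψ 0).tendsto_slope_zero
  have hneg := ((hasDerivAt_horizontal hψ (-0)).comp 0 (hasDerivAt_neg 0)).tendsto_slope_zero
  refine ⟨_, ((hrad.add hslope).sub (hpos.add hneg)).congr fun r => ?_⟩
  simp [boundaryTerm_eq hψ r]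

lemma xray_zero_eq_intervalIntegral {f : ℝ × ℝ → ℝ} {R : ℝ}
    (hR : ∀ t θ : ℝ, R ≤ |t| → f (t * cos θ, t * sin θ) = 0) (hR0 : 0 ≤ R) (θ : ℝ) :
    xray f 0 θ = ∫ t in -R..R, f (t * cos θ, t * sin θ) := by
  rw [intervalIntegral.integral_of_le (by linarith),
    setIntegral_eq_integral_of_forall_compl_eq_zero]
  · simp [xray]
  · intro t ht
    refine hR t θ ?_
    rw [le_abs]
    by_contra! h
    exact ht ⟨by linarith [h.2], h.1.le⟩

lemma xray_zero_add_pi (f : ℝ × ℝ → ℝ) (θ : ℝ) : xray f 0 (θ + π) = xray f 0 θ := by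
  simp only [xray, zero_mul, sub_zero, add_zero, cos_add_pi, sin_add_pi]
  rw [← integral_neg_eq_self]
  simp

/-- The weighted X-ray integral as an integral of weighted half-circle means. -/
lemma integral_abs_sin_mul_xray {f : ℝ × ℝ → ℝ} (hf : Continuous f) {R : ℝ}
    (hR : ∀ t θ : ℝ, R ≤ |t| → f (t * cos θ, t * sin θ) = 0) (hR0 : 0 ≤ R) :
    ∫ θ in (0 : ℝ)..(2 * π), |sin θ| * xray f 0 θ = 2 * ∫ r in -R..R, sinMean f r := by
  have hx : ∀ θ, xray f 0 θ = ∫ t in -R..R, f (t * cos θ, t * sin θ) :=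
    xray_zero_eq_intervalIntegral hR hR0
  have hxc : Continuous fun θ => xray f 0 θ := by
    simp only [hx]
    exact intervalIntegral.continuous_parametric_intervalIntegral_of_continuous'
      (f := fun θ t => f (t * cos θ, t * sin θ)) (by unfold Function.uncurry; fun_prop) _ _
  have hc : Continuous fun θ => |sin θ| * xray f 0 θ := by fun_prop
  have hshift : ∫ θ in π..(2 * π), |sin θ| * xray f 0 θ =
      ∫ θ in (0 : ℝ)..π, |sin θ| * xray f 0 θ := by
    have h := intervalIntegral.integral_comp_add_right (a := 0) (b := π)
      (fun θ => |sin θ| * xray f 0 θ) π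
    rw [zero_add, ← two_mul] at h
    rw [← h]
    simp only [sin_add_pi, abs_neg, xray_zero_add_pi]
  have hhalf : ∫ θ in (0 : ℝ)..π, |sin θ| * xray f 0 θ = ∫ r in -R..R, sinMean f r := by
    unfold sinMean
    rw [intervalIntegral_intervalIntegral_swap]
    · refine intervalIntegral.integral_congr fun θ hθ => ?_
      rw [Set.uIcc_of_le pi_pos.le] at hθ
      simp only [abs_of_nonneg (sin_nonneg_of_mem_Icc hθ), hx,
        intervalIntegral.integral_const_mul]
    · have hcu : Continuous (Function.uncurry fun r θ => sin θ * f (r * cos θ, r * sin θ)) := by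
        unfold Function.uncurry
        fun_prop
      exact (hcu.continuousOn.integrableOn_compact
        (isCompact_uIcc.prod isCompact_uIcc)).mono_set
        (Set.prod_mono Set.uIoc_subset_uIcc Set.uIoc_subset_uIcc)
  rw [← intervalIntegral.integral_add_adjacent_intervals (hc.intervalIntegrable 0 π)
    (hc.intervalIntegrable π (2 * π)), hshift, hhalf, two_mul]

/-- A truncated principal value integral, folded onto the positive half line. -/
lemma integral_le_abs_div_eq {g : ℝ → ℝ} (hg : Continuous g) {R ε : ℝ}
    (hR : ∀ t, R ≤ |t| → g t = 0) (hε : 0 < ε) (hεR : ε ≤ R) :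
    ∫ t in {t : ℝ | ε ≤ |t|}, g (-t) / t = -∫ t in ε..R, (g t - g (-t)) / t := by
  have hsub : Set.Icc (-R) (-ε) ∪ Set.Icc ε R ⊆ {t : ℝ | ε ≤ |t|} := by
    rintro t (ht | ht)
    · exact le_abs.2 (Or.inr (le_neg.1 ht.2))
    · exact le_abs.2 (Or.inl ht.1)
  have hne : ∀ t ∈ Set.Icc ε R, t ≠ 0 := fun t ht => (hε.trans_le ht.1).ne'
  have hne' : ∀ t ∈ Set.Icc (-R) (-ε), t ≠ 0 := fun t ht => by
    have := ht.2
    exact (by linarith : t < 0).ne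
  have hc : ContinuousOn (fun t => g (-t) / t) (Set.Icc ε R) :=
    ContinuousOn.div (by fun_prop) (by fun_prop) hne
  have hc' : ContinuousOn (fun t => g (-t) / t) (Set.Icc (-R) (-ε)) :=
    ContinuousOn.div (by fun_prop) (by fun_prop) hne'
  have hc2 : ContinuousOn (fun t => g t / t) (Set.Icc ε R) :=
    ContinuousOn.div (by fun_prop) (by fun_prop) hne
  have hu : Set.uIcc ε R = Set.Icc ε R := Set.uIcc_of_le hεR
  rw [setIntegral_eq_of_subset_of_forall_sdiff_eq_zero
      (measurableSet_le measurable_const continuous_abs.measurable) hsub,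
    setIntegral_union _ measurableSet_Icc (hc'.integrableOn_compact isCompact_Icc)
      (hc.integrableOn_compact isCompact_Icc),
    integral_Icc_eq_integral_Ioc, integral_Icc_eq_integral_Ioc,
    ← intervalIntegral.integral_of_le (by linarith), ← intervalIntegral.integral_of_le hεR,
    ← intervalIntegral.integral_comp_neg]
  · simp only [sub_div, neg_neg, div_neg, intervalIntegral.integral_neg]
    rw [intervalIntegral.integral_sub (hu ▸ hc2).intervalIntegrable
      (hu ▸ hc).intervalIntegrable]
    ring
  · rw [Set.disjoint_left]
    intro t ht ht'
    linarith [ht.2, ht'.1]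
  · rintro t ⟨ht, hnot⟩
    rw [hR (-t), zero_div]
    rw [abs_neg]
    by_contra! hlt
    rw [abs_lt] at hlt
    rcases le_abs.1 (show ε ≤ |t| from ht) with h | h
    · exact hnot (Or.inr ⟨h, hlt.2.le⟩)
    · exact hnot (Or.inl ⟨hlt.1.le, by linarith⟩)

/-- For `ψ ∈ C_c^∞(ℝ²)` and `φ(x₁) = ψ(x₁, 0)`, the derivative at `0` of the Hilbert
transform of `φ`, i.e. the limit as `ε → 0⁺` of `(1/π) ∫_{|t| ≥ ε} φ'(−t)/t dt`, equals
`−(1/4π) ∫_{S¹} |sin θ| T(Δψ)(0,θ) dθ`. -/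
theorem hilbert_deriv_eq_xray (ψ : ℝ × ℝ → ℝ) (hψ : ContDiff ℝ (⊤ : ℕ∞) ψ)
    (hsupp : HasCompactSupport ψ) (φ : ℝ → ℝ) (hφ : ∀ x₁ : ℝ, φ x₁ = ψ (x₁, 0)) :
    Tendsto (fun ε : ℝ => (1 / π) * ∫ t in {t : ℝ | ε ≤ |t|}, deriv φ (-t) / t)
      (nhdsWithin 0 (Set.Ioi 0))
      (nhds (-(1 / (4 * π)) * ∫ θ in (0:ℝ)..(2 * π), |Real.sin θ| * xray (lap ψ) 0 θ)) := by
  obtain rfl : φ = fun x => ψ (x, 0) := funext hφ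
  have hderiv : deriv (fun x => ψ (x, 0)) = fun x => pd (1, 0) ψ (x, 0) :=
    funext fun x => (hasDerivAt_horizontal hψ x).deriv
  obtain ⟨L, hL⟩ := exists_tendsto_boundaryTerm hψ hsupp
  obtain ⟨R, hR0, hRψ, hR1, hR2, hRl⟩ := ((eventually_gt_atTop (0 : ℝ)).and
    ((eventually_polar_eq_zero hsupp).and ((eventually_polar_eq_zero (hsupp.pd (1, 0))).and
    ((eventually_polar_eq_zero (hsupp.pd (0, 1))).and
      (eventually_polar_eq_zero hsupp.lap))))).exists
  have hbt : ∀ r, R ≤ |r| → boundaryTerm ψ r = 0 := by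
    intro r hr
    have hpos : ψ (r, 0) = 0 := by simpa using hRψ r 0 hr
    have hneg : ψ (-r, 0) = 0 := by simpa using hRψ (-r) 0 (by rwa [abs_neg])
    simp [boundaryTerm, radialFlux, radialDeriv, hRψ r _ hr, hR1 r _ hr, hR2 r _ hr, hpos, hneg]
  have hsm : Continuous (sinMean (lap ψ)) := continuous_sinMean hψ.lap.continuous
  have hsi : ∀ a b, IntervalIntegrable (sinMean (lap ψ)) volume a b :=
    fun a b => hsm.intervalIntegrable a b
  have hprim : Continuous fun x => ∫ r in (0 : ℝ)..x, sinMean (lap ψ) r :=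
    intervalIntegral.continuous_primitive hsi 0
  have hpd : Continuous fun x : ℝ => pd (1, 0) ψ (x, 0) :=
    (hψ.pd (1, 0)).continuous.comp (by fun_prop)
  have hkey : ∀ ε, 0 < ε → ε < R →
      ∫ t in {t : ℝ | ε ≤ |t|}, pd (1, 0) ψ (-t, 0) / t =
        -(1 / 2) * ((∫ r in -R..R, sinMean (lap ψ) r) - (∫ r in (0 : ℝ)..ε, sinMean (lap ψ) r) +
          (∫ r in (0 : ℝ)..(-ε), sinMean (lap ψ) r) + boundaryTerm ψ ε - boundaryTerm ψ (-ε)) := by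
    intro ε hε hεR
    have h1 := integral_sinMean_lap hψ (a := ε) (b := R) (by
      rw [Set.uIcc_of_le hεR.le]
      exact fun h => hε.not_ge h.1)
    have h2 := integral_sinMean_lap hψ (a := -R) (b := -ε) (by
      rw [Set.uIcc_of_le (by linarith)]
      exact fun h => by linarith [h.2])
    rw [← intervalIntegral.integral_comp_neg
      (fun r => (pd (1, 0) ψ (r, 0) - pd (1, 0) ψ (-r, 0)) / r)] at h2
    have hodd : ∀ r, (pd (1, 0) ψ (-r, 0) - pd (1, 0) ψ (- -r, 0)) / -r =
        (pd (1, 0) ψ (r, 0) - pd (1, 0) ψ (-r, 0)) / r := by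
      intro r
      rw [neg_neg, div_neg, ← neg_div, neg_sub]
    simp only [hodd] at h2
    rw [hbt R (le_abs_self R)] at h1
    rw [hbt (-R) (by rw [abs_neg]; exact le_abs_self R)] at h2
    have hpv := integral_le_abs_div_eq hpd (R := R) (ε := ε)
      (fun t ht => by simpa using hR1 t 0 ht) hε hεR.le
    rw [hpv]
    have e1 := intervalIntegral.integral_interval_sub_left (hsi 0 R) (hsi 0 ε)
    have e2 := intervalIntegral.integral_interval_sub_left (hsi 0 (-ε)) (hsi 0 (-R))
    have e3 := intervalIntegral.integral_interval_sub_left (hsi 0 R) (hsi 0 (-R))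
    linarith
  have hp : Tendsto (fun ε : ℝ => ε) (nhdsWithin 0 (Set.Ioi 0)) (nhdsWithin 0 {0}ᶜ) :=
    tendsto_id.mono_right (nhdsWithin_mono 0 fun x hx => (Set.mem_Ioi.1 hx).ne')
  have hn : Tendsto (fun ε : ℝ => -ε) (nhdsWithin 0 (Set.Ioi 0)) (nhdsWithin 0 {0}ᶜ) := by
    refine tendsto_nhdsWithin_iff.2 ⟨?_, ?_⟩
    · simpa using (continuous_neg (G := ℝ)).continuousAt.tendsto.mono_left
        (nhdsWithin_le_nhds (a := (0 : ℝ)) (s := Set.Ioi 0))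
    · filter_upwards [self_mem_nhdsWithin] with x hx
      exact neg_ne_zero.2 (Set.mem_Ioi.1 hx).ne'
  have hprim0 : Tendsto (fun x => ∫ r in (0 : ℝ)..x, sinMean (lap ψ) r) (nhdsWithin 0 {0}ᶜ)
      (nhds 0) := by
    simpa using hprim.continuousAt.tendsto.mono_left
      (nhdsWithin_le_nhds (a := (0 : ℝ)) (s := {0}ᶜ))
  rw [integral_abs_sin_mul_xray hψ.lap.continuous hRl hR0.le, hderiv]
  have hlim := ((((((tendsto_const_nhds (x := ∫ r in -R..R, sinMean (lap ψ) r)).sub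
    (hprim0.comp hp)).add (hprim0.comp hn)).add (hL.comp hp)).sub (hL.comp hn)).const_mul
    (-(1 / 2))).const_mul (1 / π)
  convert hlim.congr' ?_ using 2
  · field_simp
    ring
  · filter_upwards [Ioo_mem_nhdsGT hR0] with ε hε
    rw [hkey ε hε.1 hε.2]
    rfl

end
end

section
/- Let ω ∈ C_c^∞(ℝ²;ℝ) and σ ∈ ℝ, and define the continuous function u : ℂ² → ℝ by u(x+iy) = Eω(x+iy) + σ|y| for x, y ∈ ℝ². Then u is plurisubharmonic on ℂ² (i.e. u(z) ≤ (1/2π)∫_{S¹} u(z + e^{iθ}v) dθ for all z, v ∈ ℂ²) if and only if T(Δω)(s,θ) + πσ ≥ 0 for all s ∈ ℝ and θ ∈ S¹, where Δ = ∂_{x₁}² + ∂_{x₂}² is the Laplacian on ℝ². -/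
open MeasureTheory Real

noncomputable section

/-- A continuous function `u : ℂ² → ℝ` is plurisubharmonic if it satisfies the sub-mean
value property on all complex lines. -/
def Psh (u : ℂ × ℂ → ℝ) : Prop :=
  ∀ z v : ℂ × ℂ,
    u z ≤ (1 / (2 * π)) * ∫ θ in (0:ℝ)..(2 * π), u (z + Complex.exp (θ * Complex.I) • v)

/-- The function `u(x+iy) = Eω(x+iy) + σ|y|`, where `E` is the extension operator
`Eω(x+iy) = (1/π) ∫_ℝ ω(x+ty)/(1+t²) dt`. -/
def uExt (ω : ℝ × ℝ → ℝ) (σ : ℝ) : ℂ × ℂ → ℝ := fun z =>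
  (1 / π) * (∫ t : ℝ, ω (z.1.re + t * z.1.im, z.2.re + t * z.2.im) / (1 + t ^ 2))
    + σ * Real.sqrt (z.1.im ^ 2 + z.2.im ^ 2)

theorem hasFDerivAt_intervalIntegral_of_continuous {E G : Type*} [NormedAddCommGroup E]
    [NormedSpace ℝ E] [ProperSpace E] [NormedAddCommGroup G] [NormedSpace ℝ G]
    {F : E → ℝ → G} {F' : E → ℝ → E →L[ℝ] G} (a b : ℝ)
    (hF : Continuous (Function.uncurry F)) (hF' : Continuous (Function.uncurry F'))
    (hd : ∀ x t, HasFDerivAt (fun x => F x t) (F' x t) x) (x : E) :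
    HasFDerivAt (fun x => ∫ t in a..b, F x t) (∫ t in a..b, F' x t) x := by
  obtain ⟨C, hC⟩ := ((isCompact_closedBall x 1).prod
    (isCompact_uIcc (a := a) (b := b))).exists_bound_of_continuousOn
    hF'.continuousOn
  refine intervalIntegral.hasFDerivAt_integral_of_dominated_of_fderiv_le (bound := fun _ => C)
    (Metric.closedBall_mem_nhds x one_pos) ?_ ?_ ?_ ?_ ?_ ?_
  · filter_upwards with y
    exact (hF.comp (Continuous.prodMk_right y)).aestronglyMeasurable
  · exact (hF.comp (Continuous.prodMk_right x)).intervalIntegrable _ _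
  · exact (hF'.comp (Continuous.prodMk_right x)).aestronglyMeasurable
  · filter_upwards with t ht y hy
    exact hC (y, t) ⟨hy, Set.uIoc_subset_uIcc ht⟩
  · exact intervalIntegrable_const
  · filter_upwards with t _ y _ using hd y t

theorem hasDerivAt_intervalIntegral_of_continuous {F F' : ℝ → ℝ → ℝ} (a b : ℝ)
    (hF : Continuous (Function.uncurry F)) (hF' : Continuous (Function.uncurry F'))
    (hd : ∀ x t, HasDerivAt (fun x => F x t) (F' x t) x) (x : ℝ) :
    HasDerivAt (fun x => ∫ t in a..b, F x t) (∫ t in a..b, F' x t) x := by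
  have hc := (ContinuousLinearMap.toSpanSingletonCLE (𝕜 := ℝ) (E := ℝ)).continuous.comp hF'
  have := (hasFDerivAt_intervalIntegral_of_continuous a b hF
    (F' := fun x t => ContinuousLinearMap.toSpanSingleton ℝ (F' x t)) hc
    (fun x t => (hd x t).hasFDerivAt) x).hasDerivAt
  rw [ContinuousLinearMap.intervalIntegral_apply] at this
  · simpa using this
  · exact (hc.comp (Continuous.prodMk_right x)).intervalIntegrable _ _

/-- `f` has first derivative `f'` and continuous second derivative `f''` everywhere. -/
structure HasHessian {E : Type*} [NormedAddCommGroup E] [NormedSpace ℝ E] (f : E → ℝ)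
    (f' : E → E →L[ℝ] ℝ) (f'' : E → E →L[ℝ] E →L[ℝ] ℝ) : Prop where
  fst : ∀ x, HasFDerivAt f (f' x) x
  snd : ∀ x, HasFDerivAt f' (f'' x) x
  cont : Continuous f''

namespace HasHessian

variable {E : Type*} [NormedAddCommGroup E] [NormedSpace ℝ E] {f g : E → ℝ}
  {f' g' : E → E →L[ℝ] ℝ} {f'' g'' : E → E →L[ℝ] E →L[ℝ] ℝ}

theorem continuous (h : HasHessian f f' f'') : Continuous f :=
  continuous_iff_continuousAt.2 fun x => (h.fst x).continuousAt

theorem continuous_deriv (h : HasHessian f f' f'') : Continuous f' :=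
  continuous_iff_continuousAt.2 fun x => (h.snd x).continuousAt

set_option maxSynthPendingDepth 3 in
theorem add (hf : HasHessian f f' f'') (hg : HasHessian g g' g'') :
    HasHessian (fun x => f x + g x) (fun x => f' x + g' x) (fun x => f'' x + g'' x) :=
  ⟨fun x => (hf.fst x).add (hg.fst x), fun x => (hf.snd x).add (hg.snd x), hf.cont.add hg.cont⟩

theorem const_mul (c : ℝ) (hf : HasHessian f f' f'') :
    HasHessian (fun x => c * f x) (fun x => c • f' x) (fun x => c • f'' x) :=
  ⟨fun x => (hf.fst x).const_mul c, fun x => (hf.snd x).const_smul c, hf.cont.const_smul c⟩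

set_option maxSynthPendingDepth 3 in
theorem scomp {s : Set ℝ} {φ φ₁ φ₂ : ℝ → ℝ} (hf : HasHessian f f' f'') (hs : ∀ x, f x ∈ s)
    (h₁ : ∀ r ∈ s, HasDerivAt φ (φ₁ r) r) (h₂ : ∀ r ∈ s, HasDerivAt φ₁ (φ₂ r) r)
    (hc : ContinuousOn φ₂ s) :
    HasHessian (fun x => φ (f x)) (fun x => φ₁ (f x) • f' x)
      (fun x => φ₁ (f x) • f'' x + (φ₂ (f x) • f' x).smulRight (f' x)) := by
  have hφ₁ : Continuous fun x => φ₁ (f x) := by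
    rw [continuous_iff_continuousAt]
    exact fun x => (h₂ _ (hs x)).continuousAt.comp hf.continuous.continuousAt
  have hφ₂ : Continuous fun x => φ₂ (f x) := hc.comp_continuous hf.continuous hs
  refine ⟨fun x => (h₁ _ (hs x)).comp_hasFDerivAt x (hf.fst x), fun x => ?_, ?_⟩
  · exact ((h₂ _ (hs x)).comp_hasFDerivAt x (hf.fst x)).smul (hf.snd x)
  · refine (hφ₁.smul hf.cont).add ?_
    have := hf.continuous_deriv
    exact ((ContinuousLinearMap.smulRightL ℝ E (E →L[ℝ] ℝ)).continuous.comp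
      (hφ₂.smul this)).clm_apply this

set_option maxSynthPendingDepth 3 in
theorem sq_add_sq_add (l₁ l₂ : E →L[ℝ] ℝ) (c₁ c₂ d : ℝ) :
    HasHessian (fun x => (c₁ + l₁ x) ^ 2 + (c₂ + l₂ x) ^ 2 + d)
      (fun x => (2 * (c₁ + l₁ x)) • l₁ + (2 * (c₂ + l₂ x)) • l₂)
      (fun _ => ((2 : ℝ) • l₁).smulRight l₁ + ((2 : ℝ) • l₂).smulRight l₂) := by
  have h (l : E →L[ℝ] ℝ) (c : ℝ) (x : E) :
      HasFDerivAt (fun x => (c + l x) ^ 2) ((2 * (c + l x)) • l) x := by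
    simpa [mul_add] using (l.hasFDerivAt (x := x).const_add c).pow 2
  have h' (l : E →L[ℝ] ℝ) (c : ℝ) (x : E) :
      HasFDerivAt (fun x => (2 * (c + l x)) • l) (((2 : ℝ) • l).smulRight l) x :=
    ((l.hasFDerivAt.const_add c).const_mul 2).smul_const l
  exact ⟨fun x => ((h l₁ c₁ x).add (h l₂ c₂ x)).add_const d,
    fun x => (h' l₁ c₁ x).add (h' l₂ c₂ x), continuous_const⟩

theorem intervalIntegral [ProperSpace E] {F : E → ℝ → ℝ} {F' : E → ℝ → E →L[ℝ] ℝ}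
    {F'' : E → ℝ → E →L[ℝ] E →L[ℝ] ℝ} (a b : ℝ)
    (hF : ∀ t, HasHessian (F · t) (F' · t) (F'' · t)) (h₀ : Continuous (Function.uncurry F))
    (h₁ : Continuous (Function.uncurry F')) (h₂ : Continuous (Function.uncurry F'')) :
    HasHessian (fun x => ∫ t in a..b, F x t) (fun x => ∫ t in a..b, F' x t)
      (fun x => ∫ t in a..b, F'' x t) :=
  ⟨hasFDerivAt_intervalIntegral_of_continuous a b h₀ h₁ fun x t => (hF t).fst x,
    hasFDerivAt_intervalIntegral_of_continuous a b h₁ h₂ fun x t => (hF t).snd x,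
    _root_.intervalIntegral.continuous_parametric_intervalIntegral_of_continuous' h₂ a b⟩

end HasHessian

theorem bilin_add_bilin_I_mul (B : ℂ →L[ℝ] ℂ →L[ℝ] ℝ) (p : ℂ) :
    B p p + B (Complex.I * p) (Complex.I * p)
      = ‖p‖ ^ 2 * (B 1 1 + B Complex.I Complex.I) := by
  have h1 : p = p.re • (1 : ℂ) + p.im • Complex.I := by apply Complex.ext <;> simp
  have h2 : Complex.I * p = (-p.im) • (1 : ℂ) + p.re • Complex.I := by
    apply Complex.ext <;> simp
  rw [h2, Complex.sq_norm, Complex.normSq_apply]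
  conv_lhs => enter [1]; rw [h1]
  simp only [map_add, map_smul, add_apply, smul_apply,
    smul_eq_mul]
  ring

/-- The polar parametrization `(ρ, θ) ↦ exp (ρ + iθ)` of `ℂ \ {0}`. -/
def polarExp (ρ θ : ℝ) : ℂ := Complex.exp (ρ + θ * Complex.I)

theorem continuous_polarExp : Continuous (Function.uncurry polarExp) := by
  simp only [polarExp, Function.uncurry_def]; fun_prop

theorem continuous_polarExp_right (ρ : ℝ) : Continuous (polarExp ρ) :=
  continuous_polarExp.comp (Continuous.prodMk_right ρ)

theorem hasDerivAt_polarExp_left (ρ θ : ℝ) :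
    HasDerivAt (fun ρ => polarExp ρ θ) (polarExp ρ θ) ρ := by
  have : HasDerivAt (fun ρ : ℝ => (ρ : ℂ) + θ * Complex.I) 1 ρ :=
    (Complex.ofRealCLM.hasDerivAt (x := ρ)).add_const _
  simpa [polarExp] using this.cexp

theorem hasDerivAt_polarExp_right (ρ θ : ℝ) :
    HasDerivAt (fun θ => polarExp ρ θ) (Complex.I * polarExp ρ θ) θ := by
  have : HasDerivAt (fun θ : ℝ => (ρ : ℂ) + θ * Complex.I) (1 * Complex.I) θ :=
    ((Complex.ofRealCLM.hasDerivAt (x := θ)).mul_const _).const_add _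
  simpa [polarExp, mul_comm] using this.cexp

theorem norm_polarExp (ρ θ : ℝ) : ‖polarExp ρ θ‖ = Real.exp ρ := by
  simp [polarExp, Complex.norm_exp]

section Circle

variable {f : ℂ → ℝ} {f' : ℂ → ℂ →L[ℝ] ℝ} {f'' : ℂ → ℂ →L[ℝ] ℂ →L[ℝ] ℝ}

theorem HasHessian.hasDerivAt_circle (hf : HasHessian f f' f'') (ρ : ℝ) :
    HasDerivAt (fun ρ => ∫ θ in (0:ℝ)..(2*π), f (polarExp ρ θ))
      (∫ θ in (0:ℝ)..(2*π), f' (polarExp ρ θ) (polarExp ρ θ)) ρ :=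
  hasDerivAt_intervalIntegral_of_continuous (F := fun ρ θ => f (polarExp ρ θ))
    (F' := fun ρ θ => f' (polarExp ρ θ) (polarExp ρ θ)) 0 (2*π)
    (hf.continuous.comp continuous_polarExp)
    ((hf.continuous_deriv.comp continuous_polarExp).clm_apply continuous_polarExp)
    (fun ρ θ => (hf.fst (polarExp ρ θ)).comp_hasDerivAt ρ (hasDerivAt_polarExp_left ρ θ)) ρ

theorem HasHessian.hasDerivAt_deriv_circle (hf : HasHessian f f' f'') (ρ : ℝ) :
    HasDerivAt (fun ρ => ∫ θ in (0:ℝ)..(2*π), f' (polarExp ρ θ) (polarExp ρ θ))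
      (∫ θ in (0:ℝ)..(2*π), (f'' (polarExp ρ θ) (polarExp ρ θ) (polarExp ρ θ)
        + f' (polarExp ρ θ) (polarExp ρ θ))) ρ := by
  have hc := continuous_polarExp
  have h1 := (hf.continuous_deriv.comp hc).clm_apply hc
  have h2 := ((hf.cont.comp hc).clm_apply hc).clm_apply hc
  have hd (ρ θ : ℝ) : HasDerivAt (fun ρ => f' (polarExp ρ θ) (polarExp ρ θ))
      (f'' (polarExp ρ θ) (polarExp ρ θ) (polarExp ρ θ)
        + f' (polarExp ρ θ) (polarExp ρ θ)) ρ := by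
    have : HasDerivAt (fun ρ => f' (polarExp ρ θ)) (f'' (polarExp ρ θ) (polarExp ρ θ)) ρ :=
      HasFDerivAt.comp_hasDerivAt (f := fun ρ => polarExp ρ θ) ρ (hf.snd (polarExp ρ θ))
        (hasDerivAt_polarExp_left ρ θ)
    exact this.clm_apply (hasDerivAt_polarExp_left ρ θ)
  exact hasDerivAt_intervalIntegral_of_continuous
    (F := fun ρ θ => f' (polarExp ρ θ) (polarExp ρ θ))
    (F' := fun ρ θ => f'' (polarExp ρ θ) (polarExp ρ θ) (polarExp ρ θ)
      + f' (polarExp ρ θ) (polarExp ρ θ)) 0 (2*π) h1 (h2.add h1) hd ρ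

theorem HasHessian.continuous_angular (hf : HasHessian f f' f'') (ρ : ℝ) :
    Continuous fun θ => f'' (polarExp ρ θ) (Complex.I * polarExp ρ θ) (Complex.I * polarExp ρ θ)
      - f' (polarExp ρ θ) (polarExp ρ θ) := by
  have hc := continuous_polarExp_right ρ
  have hIc : Continuous fun θ => Complex.I * polarExp ρ θ := continuous_const.mul hc
  exact (((hf.cont.comp hc).clm_apply hIc).clm_apply hIc).sub
    ((hf.continuous_deriv.comp hc).clm_apply hc)

/-- The second angular derivative integrates to zero over a period. -/
theorem HasHessian.integral_angular (hf : HasHessian f f' f'') (ρ : ℝ) :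
    ∫ θ in (0:ℝ)..(2*π), (f'' (polarExp ρ θ) (Complex.I * polarExp ρ θ)
      (Complex.I * polarExp ρ θ) - f' (polarExp ρ θ) (polarExp ρ θ)) = 0 := by
  have hd : ∀ θ, HasDerivAt (fun θ => f' (polarExp ρ θ) (Complex.I * polarExp ρ θ))
      (f'' (polarExp ρ θ) (Complex.I * polarExp ρ θ) (Complex.I * polarExp ρ θ)
        - f' (polarExp ρ θ) (polarExp ρ θ)) θ := by
    intro θ
    have := ((hf.snd (polarExp ρ θ)).comp_hasDerivAt θ (hasDerivAt_polarExp_right ρ θ)).clm_apply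
      ((hasDerivAt_polarExp_right ρ θ).const_mul Complex.I)
    rw [← mul_assoc, Complex.I_mul_I, neg_one_mul, map_neg, ← sub_eq_add_neg] at this
    exact this
  rw [intervalIntegral.integral_eq_sub_of_hasDerivAt (fun θ _ => hd θ)
    ((hf.continuous_angular ρ).intervalIntegrable _ _)]
  have : polarExp ρ (2 * π) = polarExp ρ 0 := by
    simp only [polarExp]
    push_cast
    rw [Complex.exp_add, Complex.exp_two_pi_mul_I]
    simp
  rw [this, sub_self]

/-- The sub-mean value inequality for a `C²` function with nonnegative Laplacian on a disc. -/
theorem HasHessian.circle_submean (hf : HasHessian f f' f'') {r : ℝ} (hr : 0 < r)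
    (hpos : ∀ p, ‖p‖ ≤ r → 0 ≤ f'' p 1 1 + f'' p Complex.I Complex.I) :
    2 * π * f 0 ≤ ∫ θ in (0:ℝ)..(2 * π), f (r * Complex.exp (θ * Complex.I)) := by
  have d1 := hf.hasDerivAt_circle
  have d2 := hf.hasDerivAt_deriv_circle
  have hper := hf.integral_angular
  set m : ℝ → ℝ := fun ρ => ∫ θ in (0:ℝ)..(2*π), f (polarExp ρ θ) with hm
  have hdm : deriv m = fun ρ => ∫ θ in (0:ℝ)..(2*π), f' (polarExp ρ θ) (polarExp ρ θ) :=
    funext fun ρ => (d1 ρ).deriv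
  have hconv : ConvexOn ℝ (Set.Iic (Real.log r)) m := by
    refine convexOn_of_deriv2_nonneg' (convex_Iic _)
      (fun ρ _ => (d1 ρ).differentiableAt.differentiableWithinAt) ?_ ?_
    · rw [hdm]
      exact fun ρ _ => (d2 ρ).differentiableAt.differentiableWithinAt
    · intro ρ hρ
      simp only [Function.iterate_succ, Function.iterate_zero, Function.comp_apply, id]
      rw [hdm, (d2 ρ).deriv]
      refine le_of_le_of_eq ?_ (congrArg₂ (· + ·) rfl (hper ρ) |>.trans (add_zero _))
      rw [← intervalIntegral.integral_add]
      · refine intervalIntegral.integral_nonneg (by positivity) fun θ _ => ?_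
        have hle : ‖polarExp ρ θ‖ ≤ r := by
          rw [norm_polarExp, ← Real.exp_log hr]
          exact Real.exp_le_exp.2 hρ
        have := bilin_add_bilin_I_mul (f'' (polarExp ρ θ)) (polarExp ρ θ)
        have h0 := mul_nonneg (sq_nonneg ‖polarExp ρ θ‖) (hpos _ hle)
        linarith
      · have hc := continuous_polarExp_right ρ
        exact ((((hf.cont.comp hc).clm_apply hc).clm_apply hc).add
          ((hf.continuous_deriv.comp hc).clm_apply hc)).intervalIntegrable _ _
      · exact (hf.continuous_angular ρ).intervalIntegrable _ _
  have hlim : Filter.Tendsto m Filter.atBot (nhds (2 * π * f 0)) := by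
    have hcont : Continuous fun s : ℝ =>
        ∫ θ in (0:ℝ)..(2*π), f (s * Complex.exp (θ * Complex.I)) := by
      apply intervalIntegral.continuous_parametric_intervalIntegral_of_continuous'
      have := hf.continuous
      simp only [Function.uncurry_def]
      fun_prop
    have h := (hcont.tendsto 0).comp Real.tendsto_exp_atBot
    convert h using 1
    · funext ρ
      simp [hm, polarExp, Complex.exp_add]
    · simp
  have hmr : m (Real.log r) = ∫ θ in (0:ℝ)..(2 * π), f (r * Complex.exp (θ * Complex.I)) := by
    simp only [hm, polarExp, Complex.exp_add, ← Complex.ofReal_exp, Real.exp_log hr]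
  rw [← hmr]
  have hmid : ∀ t : ℝ, 0 ≤ t → m (Real.log r - t) ≤
      (1 / 2) * m (Real.log r - 2 * t) + (1 / 2) * m (Real.log r) := by
    intro t ht
    have := hconv.2 (show Real.log r - 2 * t ∈ Set.Iic (Real.log r) by simp [ht])
      (show Real.log r ∈ Set.Iic (Real.log r) by simp)
      (show (0 : ℝ) ≤ 1 / 2 by norm_num) (show (0 : ℝ) ≤ 1 / 2 by norm_num) (by norm_num)
    simp only [smul_eq_mul] at this
    rwa [show 1 / 2 * (Real.log r - 2 * t) + 1 / 2 * Real.log r = Real.log r - t by ring] at this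
  have l1 : Filter.Tendsto (fun t : ℝ => m (Real.log r - t)) Filter.atTop (nhds (2 * π * f 0)) :=
    hlim.comp (Filter.tendsto_atBot_add_const_left _ _ Filter.tendsto_neg_atTop_atBot)
  have l2 : Filter.Tendsto (fun t : ℝ => m (Real.log r - 2 * t)) Filter.atTop
      (nhds (2 * π * f 0)) :=
    l1.comp (Filter.tendsto_id.const_mul_atTop two_pos)
  have := le_of_tendsto_of_tendsto l1 ((l2.const_mul (1 / 2)).add_const _)
    (by filter_upwards [Filter.eventually_ge_atTop 0] with t ht using hmid t ht)
  linarith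

/-- A `C²` function satisfying the sub-mean value inequality at `0` on all small circles has
nonnegative Laplacian at `0`. -/
theorem HasHessian.laplacian_nonneg_of_submean (hf : HasHessian f f' f'')
    (h : ∀ r : ℝ, 0 < r →
      2 * π * f 0 ≤ ∫ θ in (0:ℝ)..(2 * π), f (r * Complex.exp (θ * Complex.I))) :
    0 ≤ f'' 0 1 1 + f'' 0 Complex.I Complex.I := by
  by_contra! hneg
  set ε : ℝ := -(f'' 0 1 1 + f'' 0 Complex.I Complex.I) / 8 with hε
  have hε0 : 0 < ε := by linarith
  have hL : Continuous fun p => f'' p 1 1 + f'' p Complex.I Complex.I := by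
    have := hf.cont
    fun_prop
  have hnear : ∀ᶠ p in nhds (0 : ℂ), f'' p 1 1 + f'' p Complex.I Complex.I < -4 * ε :=
    hL.continuousAt.eventually_lt continuousAt_const (by linarith)
  obtain ⟨r, hr, hball⟩ := Metric.nhds_basis_closedBall.eventually_iff.1 hnear
  have hq := HasHessian.sq_add_sq_add Complex.reCLM Complex.imCLM 0 0 0
  have hsub := ((hf.const_mul (-1)).add (hq.const_mul (-ε))).circle_submean hr (fun p hp => by
    have := hball (mem_closedBall_zero_iff.2 hp)
    simp
    linarith)
  have hnorm : ∀ θ : ℝ, -1 * f (r * Complex.exp (θ * Complex.I)) +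
      -ε * ((0 + Complex.reCLM (r * Complex.exp (θ * Complex.I))) ^ 2
        + (0 + Complex.imCLM (r * Complex.exp (θ * Complex.I))) ^ 2 + 0)
      = -f (r * Complex.exp (θ * Complex.I)) - ε * r ^ 2 := by
    intro θ
    have h1 : ‖(r : ℂ) * Complex.exp (θ * Complex.I)‖ ^ 2 = r ^ 2 := by
      simp [Complex.norm_exp_ofReal_mul_I]
    rw [Complex.sq_norm, Complex.normSq_apply] at h1
    simp only [Complex.reCLM_apply, Complex.imCLM_apply, ← h1]
    ring
  simp only [hnorm] at hsub
  rw [intervalIntegral.integral_sub, intervalIntegral.integral_neg,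
    intervalIntegral.integral_const] at hsub
  · have h2 := h r hr
    have h3 : 0 < 2 * π * (ε * r ^ 2) := by positivity
    simp at hsub
    linarith
  · apply Continuous.intervalIntegrable
    have := hf.continuous
    fun_prop
  · exact intervalIntegrable_const

end Circle

section Lines

theorem HasCompactSupport.exists_eq_zero_of_norm_gt {E F : Type*} [NormedAddCommGroup E] [Zero F]
    {g : E → F} (hg : HasCompactSupport g) : ∃ R : ℝ, 0 < R ∧ ∀ p, R < ‖p‖ → g p = 0 := by
  obtain ⟨R, hR, h⟩ := hg.isCompact.isBounded.exists_pos_norm_le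
  refine ⟨R, hR, fun p hp => ?_⟩
  by_contra hne
  exact absurd (h p (subset_tsupport g hne)) (not_le.2 hp)

theorem HasCompactSupport.comp_line {E F : Type*} [NormedAddCommGroup E] [NormedSpace ℝ E]
    [Zero F] {g : E → F} (hg : HasCompactSupport g) (q : E) {e : E} (he : e ≠ 0) :
    HasCompactSupport fun t : ℝ => g (q + t • e) := by
  obtain ⟨R, -, h⟩ := hg.exists_eq_zero_of_norm_gt
  have he' : 0 < ‖e‖ := norm_pos_iff.2 he
  refine HasCompactSupport.intro (isCompact_closedBall (0 : ℝ) ((R + ‖q‖) / ‖e‖)) fun t ht => ?_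
  apply h
  rw [mem_closedBall_zero_iff, not_le, div_lt_iff₀ he', ← norm_smul] at ht
  have := norm_sub_le (q + t • e) q
  rw [add_sub_cancel_left] at this
  linarith

variable {ω : ℝ × ℝ → ℝ}

theorem ContDiff.hasHessian {E : Type*} [NormedAddCommGroup E] [NormedSpace ℝ E] {f : E → ℝ}
    (hf : ContDiff ℝ 2 f) : HasHessian f (fderiv ℝ f) (fderiv ℝ (fderiv ℝ f)) := by
  have h1 : ContDiff ℝ 1 (fderiv ℝ f) := hf.fderiv_right (by norm_num)
  exact ⟨fun x => (hf.differentiable (by norm_num) x).hasFDerivAt,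
    fun x => (h1.differentiable (by norm_num) x).hasFDerivAt, h1.continuous_fderiv (by norm_num)⟩

theorem integrable_hessian_line (hω : ContDiff ℝ 2 ω) (hs : HasCompactSupport ω)
    (q : ℝ × ℝ) {e : ℝ × ℝ} (he : e ≠ 0) (v w : ℝ × ℝ) :
    Integrable fun t : ℝ => fderiv ℝ (fderiv ℝ ω) (q + t • e) v w := by
  have hc := hω.hasHessian.cont
  refine Continuous.integrable_of_hasCompactSupport (by fun_prop) ?_
  exact ((hs.fderiv ℝ).fderiv ℝ).comp_line q he |>.comp_left
    (g := fun B : ℝ × ℝ →L[ℝ] ℝ × ℝ →L[ℝ] ℝ => B v w) (by simp)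

theorem integral_hessian_line_parallel (hω : ContDiff ℝ 2 ω) (hs : HasCompactSupport ω)
    (q : ℝ × ℝ) {e : ℝ × ℝ} (he : e ≠ 0) (w : ℝ × ℝ) :
    ∫ t : ℝ, fderiv ℝ (fderiv ℝ ω) (q + t • e) e w = 0 := by
  have hc := hω.hasHessian.continuous_deriv
  refine integral_eq_zero_of_hasDerivAt_of_integrable (f := fun t : ℝ => fderiv ℝ ω (q + t • e) w)
    (fun t => ?_) (integrable_hessian_line hω hs q he e w) ?_
  · have h1 : HasDerivAt (fun t : ℝ => q + t • e) e t := by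
      simpa using ((hasDerivAt_id t).smul_const e).const_add q
    have h2 := HasFDerivAt.comp_hasDerivAt (f := fun t : ℝ => q + t • e) t
      (hω.hasHessian.snd (q + t • e)) h1
    simpa using h2.clm_apply (hasDerivAt_const t w)
  · refine Continuous.integrable_of_hasCompactSupport (by fun_prop) ?_
    exact (hs.fderiv ℝ).comp_line q he |>.comp_left
      (g := fun B : ℝ × ℝ →L[ℝ] ℝ => B w) (by simp)

theorem lap_eq_hessian (hω : ContDiff ℝ 2 ω) (p : ℝ × ℝ) :
    lap ω p = fderiv ℝ (fderiv ℝ ω) p (1, 0) (1, 0) + fderiv ℝ (fderiv ℝ ω) p (0, 1) (0, 1) := by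
  have h (v : ℝ × ℝ) : pd v (pd v ω) p = fderiv ℝ (fderiv ℝ ω) p v v := by
    have := (hω.hasHessian.snd p).clm_apply (hasFDerivAt_const v p)
    change fderiv ℝ (fun q => fderiv ℝ ω q v) p v = _
    rw [this.fderiv]
    simp
  rw [lap, h, h]

theorem hessian_symm (hω : ContDiff ℝ 2 ω) (p v w : ℝ × ℝ) :
    fderiv ℝ (fderiv ℝ ω) p v w = fderiv ℝ (fderiv ℝ ω) p w v :=
  (hω.contDiffAt.isSymmSndFDerivAt (by simp)).eq v w

/-- Second derivatives of `ω` integrated along a line only see the normal component. -/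
theorem integral_hessian_line (hω : ContDiff ℝ 2 ω) (hs : HasCompactSupport ω) (s θ : ℝ)
    (w : ℝ × ℝ) :
    ∫ t : ℝ, fderiv ℝ (fderiv ℝ ω)
        (t * cos θ - s * sin θ, t * sin θ + s * cos θ) w w
      = (w.2 * cos θ - w.1 * sin θ) ^ 2 * xray (lap ω) s θ := by
  set e : ℝ × ℝ := (cos θ, sin θ) with he
  set n : ℝ × ℝ := (-sin θ, cos θ) with hn
  set B := fderiv ℝ (fderiv ℝ ω)
  have hcs := Real.sin_sq_add_cos_sq θ
  have he0 : e ≠ 0 := by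
    intro h
    have h1 : cos θ = 0 := congrArg Prod.fst h
    have h2 : sin θ = 0 := congrArg Prod.snd h
    simp [h1, h2] at hcs
  have hpt (t : ℝ) : (t * cos θ - s * sin θ, t * sin θ + s * cos θ) = s • n + t • e := by
    ext <;> simp [he, hn] <;> ring
  set β := w.2 * cos θ - w.1 * sin θ with hβ
  set α := w.1 * cos θ + w.2 * sin θ with hα
  have hw : w = α • e + β • n := by
    ext
    · simp [he, hn, hα, hβ]; linear_combination -w.1 * hcs
    · simp [he, hn, hα, hβ]; linear_combination -w.2 * hcs
  have h10 : ((1, 0) : ℝ × ℝ) = cos θ • e + (-sin θ) • n := by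
    ext
    · simp [he, hn]; linear_combination -hcs
    · simp [he, hn]; ring
  have h01 : ((0, 1) : ℝ × ℝ) = sin θ • e + cos θ • n := by
    ext
    · simp [he, hn]; ring
    · simp [he, hn]; linear_combination -hcs
  have hlap (p : ℝ × ℝ) : lap ω p = B p e e + B p n n := by
    rw [lap_eq_hessian hω, h10, h01]
    simp only [map_add, map_smul, add_apply, smul_apply, smul_eq_mul, B]
    linear_combination
      (fderiv ℝ (fderiv ℝ ω) p e e + fderiv ℝ (fderiv ℝ ω) p n n) * hcs
  have hI := integrable_hessian_line hω hs (s • n) he0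
  have hP := integral_hessian_line_parallel hω hs (s • n) he0
  have hww (p : ℝ × ℝ) : B p w w = α ^ 2 * B p e e + 2 * α * β * B p e n + β ^ 2 * B p n n := by
    rw [hw]
    simp only [map_add, map_smul, add_apply, smul_apply, smul_eq_mul]
    rw [show B p n e = B p e n from hessian_symm hω p n e]
    ring
  simp only [xray, hpt, hlap, hww]
  rw [integral_add (by exact ((hI e e).const_mul _).add ((hI e n).const_mul _))
      (by exact (hI n n).const_mul _),
    integral_add (by exact (hI e e).const_mul _) (by exact (hI e n).const_mul _),
    integral_add (by exact hI e e) (by exact hI n n), integral_const_mul, integral_const_mul,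
    integral_const_mul]
  simp only [B, hP]
  ring

theorem exists_integral_hessian_line_eq (hω : ContDiff ℝ 2 ω) (hs : HasCompactSupport ω)
    (x : ℝ × ℝ) {y : ℝ × ℝ} (hy : y ≠ 0) :
    ∃ s θ : ℝ, ∀ w : ℝ × ℝ, ∫ t : ℝ, fderiv ℝ (fderiv ℝ ω) (x + t • y) w w
      = (w.2 * y.1 - w.1 * y.2) ^ 2 / √(y.1 ^ 2 + y.2 ^ 2) ^ 3 * xray (lap ω) s θ := by
  set ζ : ℂ := ⟨y.1, y.2⟩ with hζ
  have hζ0 : ζ ≠ 0 := fun h => hy (Prod.ext (congrArg Complex.re h) (congrArg Complex.im h))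
  set r := ‖ζ‖ with hr
  have hr0 : 0 < r := norm_pos_iff.2 hζ0
  have hrs : √(y.1 ^ 2 + y.2 ^ 2) = r := by
    rw [hr, Complex.norm_def, Complex.normSq_apply]; simp [hζ, sq]
  set θ := ζ.arg
  have hc : y.1 = r * cos θ := (Complex.norm_mul_cos_arg ζ).symm
  have hsn : y.2 = r * sin θ := (Complex.norm_mul_sin_arg ζ).symm
  set s := x.2 * cos θ - x.1 * sin θ with hs'
  set k := x.1 * cos θ + x.2 * sin θ with hk
  have hcs := Real.sin_sq_add_cos_sq θ
  refine ⟨s, θ, fun w => ?_⟩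
  have hpt (t : ℝ) : x + t • y = ((r * t + k) * cos θ - s * sin θ,
      (r * t + k) * sin θ + s * cos θ) := by
    ext
    · simp [hc, hs', hk]; linear_combination -x.1 * hcs
    · simp [hsn, hs', hk]; linear_combination -x.2 * hcs
  simp only [hpt]
  rw [Measure.integral_comp_mul_left (fun t => fderiv ℝ (fderiv ℝ ω)
      ((t + k) * cos θ - s * sin θ, (t + k) * sin θ + s * cos θ) w w) r,
    integral_add_right_eq_self (fun t => fderiv ℝ (fderiv ℝ ω)
      (t * cos θ - s * sin θ, t * sin θ + s * cos θ) w w) k,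
    integral_hessian_line hω hs, hrs, hc, hsn, abs_of_pos (inv_pos.2 hr0), smul_eq_mul]
  field_simp

theorem exists_xray_lap_eq_zero (hω : ContDiff ℝ 2 ω) (hs : HasCompactSupport ω) :
    ∃ s : ℝ, xray (lap ω) s 0 = 0 := by
  obtain ⟨R, hR, h⟩ := ((hs.fderiv ℝ).fderiv ℝ).exists_eq_zero_of_norm_gt
  refine ⟨R + 1, ?_⟩
  have (t : ℝ) : lap ω (t * cos 0 - (R + 1) * sin 0, t * sin 0 + (R + 1) * cos 0) = 0 := by
    rw [lap_eq_hessian hω, h]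
    · simp
    · refine lt_of_lt_of_le ?_ (norm_snd_le _)
      simp only [sin_zero, cos_zero, mul_zero, mul_one, zero_add, Real.norm_eq_abs]
      rw [abs_of_pos (by linarith)]
      linarith
  simp only [xray, this, integral_zero]

end Lines

section Extension

/-- The real part `ℂ² → ℝ²`. -/
def rePart : ℂ × ℂ →L[ℝ] ℝ × ℝ := Complex.reCLM.prodMap Complex.reCLM

/-- The imaginary part `ℂ² → ℝ²`. -/
def imPart : ℂ × ℂ →L[ℝ] ℝ × ℝ := Complex.imCLM.prodMap Complex.imCLM

/-- The complex line `ζ ↦ ζ v` as a real-linear map. -/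
def complexLine (v : ℂ × ℂ) : ℂ →L[ℝ] ℂ × ℂ :=
  (ContinuousLinearMap.toSpanSingleton ℂ v).restrictScalars ℝ

@[simp] theorem rePart_apply (z : ℂ × ℂ) : rePart z = (z.1.re, z.2.re) := rfl

@[simp] theorem imPart_apply (z : ℂ × ℂ) : imPart z = (z.1.im, z.2.im) := rfl

@[simp] theorem complexLine_apply (v : ℂ × ℂ) (ζ : ℂ) : complexLine v ζ = ζ • v := rfl

theorem HasHessian.comp_affine {E G : Type*} [NormedAddCommGroup E] [NormedSpace ℝ E]
    [NormedAddCommGroup G] [NormedSpace ℝ G] {f : E → ℝ} {f' : E → E →L[ℝ] ℝ}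
    {f'' : E → E →L[ℝ] E →L[ℝ] ℝ} (hf : HasHessian f f' f'') (c : E) (l : G →L[ℝ] E) :
    HasHessian (fun x => f (c + l x)) (fun x => (f' (c + l x)).comp l)
      (fun x => ((ContinuousLinearMap.compL ℝ G E ℝ).flip l).comp ((f'' (c + l x)).comp l)) := by
  have hl (x : G) : HasFDerivAt (fun x => c + l x) l x := l.hasFDerivAt.const_add c
  refine ⟨fun x => (hf.fst _).comp x (hl x), fun x => ?_, ?_⟩
  · have := (hf.snd (c + l x)).comp x (hl x)
    exact ((ContinuousLinearMap.compL ℝ G E ℝ).flip l).hasFDerivAt.comp x this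
  · have := hf.cont
    exact continuous_const.clm_comp ((this.comp (by fun_prop)).clm_comp continuous_const)

variable {ω : ℝ × ℝ → ℝ}

set_option maxSynthPendingDepth 3 in
theorem exists_hessian_truncated (hω : ContDiff ℝ 2 ω) (N : ℝ) (z v : ℂ × ℂ) :
    ∃ f' f'', HasHessian (fun ζ : ℂ => ∫ t in -N..N,
        ω (rePart (z + ζ • v) + t • imPart (z + ζ • v)) / (1 + t ^ 2)) f' f'' ∧
      ∀ ζ, f'' ζ 1 1 + f'' ζ Complex.I Complex.I = ∫ t in -N..N,
        (fderiv ℝ (fderiv ℝ ω) (rePart (z + ζ • v) + t • imPart (z + ζ • v)) (rePart v) (rePart v)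
          + fderiv ℝ (fderiv ℝ ω) (rePart (z + ζ • v) + t • imPart (z + ζ • v))
            (imPart v) (imPart v)) := by
  have hH := hω.hasHessian
  set A : ℝ → ℂ × ℂ →L[ℝ] ℝ × ℝ := fun t => rePart + t • imPart with hA
  have hAc : Continuous A := by fun_prop
  set l : ℝ → ℂ →L[ℝ] ℝ × ℝ := fun t => (A t).comp (complexLine v) with hl
  have hlc : Continuous l := hAc.clm_comp continuous_const
  have hpt (ζ : ℂ) (t : ℝ) : rePart (z + ζ • v) + t • imPart (z + ζ • v) = A t z + l t ζ := by
    simp only [hA, hl, map_add, add_apply, smul_apply, ContinuousLinearMap.comp_apply,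
      complexLine_apply, smul_add]
    abel
  have hptc : Continuous fun p : ℂ × ℝ => A p.2 z + l p.2 p.1 :=
    ((hAc.comp continuous_snd).clm_apply continuous_const).add
      ((hlc.comp continuous_snd).clm_apply continuous_fst)
  have hk : Continuous fun t : ℝ => (1 + t ^ 2)⁻¹ :=
    Continuous.inv₀ (by fun_prop) fun t => by positivity
  have hc2 : Continuous fun p : ℂ × ℝ =>
      ((ContinuousLinearMap.compL ℝ ℂ (ℝ × ℝ) ℝ).flip (l p.2)).comp
        ((fderiv ℝ (fderiv ℝ ω) (A p.2 z + l p.2 p.1)).comp (l p.2)) :=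
    ((ContinuousLinearMap.compL ℝ ℂ (ℝ × ℝ) ℝ).flip.continuous.comp
      (hlc.comp continuous_snd)).clm_comp
      ((hH.cont.comp hptc).clm_comp (hlc.comp continuous_snd))
  have hc2' := (hk.comp continuous_snd).smul hc2
  have hint := HasHessian.intervalIntegral (-N) N
    (fun t => ((hH.comp_affine (A t z) (l t)).const_mul (1 + t ^ 2)⁻¹))
    ((hk.comp continuous_snd).mul (hω.continuous.comp hptc))
    ((hk.comp continuous_snd).smul
      ((hH.continuous_deriv.comp hptc).clm_comp (hlc.comp continuous_snd))) hc2'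
  have hfun : (fun ζ : ℂ => ∫ t in -N..N,
      ω (rePart (z + ζ • v) + t • imPart (z + ζ • v)) / (1 + t ^ 2)) =
      fun ζ => ∫ t in -N..N, (1 + t ^ 2)⁻¹ * ω (A t z + l t ζ) := by
    funext ζ
    simp only [hpt, div_eq_inv_mul]
  rw [hfun]
  refine ⟨_, _, hint, fun ζ => ?_⟩
  have hi : IntervalIntegrable (fun t => (1 + t ^ 2)⁻¹ •
      ((ContinuousLinearMap.compL ℝ ℂ (ℝ × ℝ) ℝ).flip (l t)).comp
        ((fderiv ℝ (fderiv ℝ ω) (A t z + l t ζ)).comp (l t))) volume (-N) N :=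
    (hc2'.comp (Continuous.prodMk_right ζ)).intervalIntegrable _ _
  have happ (c : ℂ) : (∫ t in -N..N, (1 + t ^ 2)⁻¹ •
      ((ContinuousLinearMap.compL ℝ ℂ (ℝ × ℝ) ℝ).flip (l t)).comp
        ((fderiv ℝ (fderiv ℝ ω) (A t z + l t ζ)).comp (l t))) c c
      = ∫ t in -N..N, (1 + t ^ 2)⁻¹ * fderiv ℝ (fderiv ℝ ω) (A t z + l t ζ) (l t c) (l t c) := by
    rw [ContinuousLinearMap.intervalIntegral_apply hi,
      ContinuousLinearMap.intervalIntegral_apply]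
    · rfl
    · exact ((hc2'.comp (Continuous.prodMk_right ζ)).clm_apply
        continuous_const).intervalIntegrable _ _
  have hci (c : ℂ) : IntervalIntegrable (fun t => (1 + t ^ 2)⁻¹ *
      fderiv ℝ (fderiv ℝ ω) (A t z + l t ζ) (l t c) (l t c)) volume (-N) N :=
    (((hc2'.comp (Continuous.prodMk_right ζ)).clm_apply
        continuous_const).clm_apply continuous_const).intervalIntegrable _ _
  rw [happ, happ, ← intervalIntegral.integral_add (hci _) (hci _)]
  refine intervalIntegral.integral_congr fun t _ => ?_
  have h1 : l t 1 = rePart v + t • imPart v := by simp [hl, hA]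
  have hI : l t Complex.I = t • rePart v - imPart v := by
    ext <;> simp [hl, hA] <;> ring
  simp only [hpt]
  simp only [h1, hI, map_add, map_sub, map_smul, add_apply, smul_apply, sub_apply,
    smul_eq_mul]
  have : (1 + t ^ 2) ≠ 0 := by positivity
  field_simp
  ring

theorem exists_hessian_sqrt (d : ℝ) (z v : ℂ × ℂ)
    (hd : ∀ ζ : ℂ, 0 < (z + ζ • v).1.im ^ 2 + (z + ζ • v).2.im ^ 2 + d) :
    ∃ f' f'', HasHessian (fun ζ : ℂ => √((z + ζ • v).1.im ^ 2 + (z + ζ • v).2.im ^ 2 + d)) f' f'' ∧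
      ∀ ζ, f'' ζ 1 1 + f'' ζ Complex.I Complex.I =
        ((v.1.re ^ 2 + v.2.re ^ 2 + v.1.im ^ 2 + v.2.im ^ 2)
            * ((z + ζ • v).1.im ^ 2 + (z + ζ • v).2.im ^ 2 + d)
          - (v.1.re * (z + ζ • v).1.im + v.2.re * (z + ζ • v).2.im) ^ 2
          - (v.1.im * (z + ζ • v).1.im + v.2.im * (z + ζ • v).2.im) ^ 2)
          / √((z + ζ • v).1.im ^ 2 + (z + ζ • v).2.im ^ 2 + d) ^ 3 := by
  set l : ℂ →L[ℝ] ℝ × ℝ := imPart.comp (complexLine v) with hl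
  have hq := HasHessian.sq_add_sq_add ((ContinuousLinearMap.fst ℝ ℝ ℝ).comp l)
    ((ContinuousLinearMap.snd ℝ ℝ ℝ).comp l) z.1.im z.2.im d
  have hqe (ζ : ℂ) : (z.1.im + ((ContinuousLinearMap.fst ℝ ℝ ℝ).comp l) ζ) ^ 2 +
      (z.2.im + ((ContinuousLinearMap.snd ℝ ℝ ℝ).comp l) ζ) ^ 2 + d
      = (z + ζ • v).1.im ^ 2 + (z + ζ • v).2.im ^ 2 + d := rfl
  have h1 : ∀ r ∈ Set.Ioi (0 : ℝ), HasDerivAt (fun x => √x) (1 / (2 * √r)) r := fun r hr =>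
    Real.hasDerivAt_sqrt (ne_of_gt hr)
  have h2 : ∀ r ∈ Set.Ioi (0 : ℝ), HasDerivAt (fun x => 1 / (2 * √x)) (-1 / (4 * √r ^ 3)) r := by
    intro r hr
    have h0 : 0 < √r := Real.sqrt_pos.2 hr
    have h4 := ((h1 r hr).const_mul 2).inv (by positivity)
    refine (h4.congr_deriv ?_).congr_of_eventuallyEq (.of_forall fun x => by simp)
    field_simp
    norm_num
  have h3 : ContinuousOn (fun r : ℝ => -1 / (4 * √r ^ 3)) (Set.Ioi 0) := by
    refine ContinuousOn.div (by fun_prop) (by fun_prop) fun r hr => ?_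
    have h0 : 0 < √r := Real.sqrt_pos.2 hr
    positivity
  have hs := hq.scomp (s := Set.Ioi 0) (fun ζ => by rw [hqe]; exact hd ζ) h1 h2 h3
  refine ⟨_, _, hs, fun ζ => ?_⟩
  have h0 : 0 < √((z + ζ • v).1.im ^ 2 + (z + ζ • v).2.im ^ 2 + d) := Real.sqrt_pos.2 (hd ζ)
  have hsq := Real.sq_sqrt (hd ζ).le
  simp only [hqe]
  set S := √((z + ζ • v).1.im ^ 2 + (z + ζ • v).2.im ^ 2 + d)
  rw [← hsq]
  simp [hl]
  field_simp
  ring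

theorem exists_hessian_log (N : ℝ) (ζ₀ : ℂ) :
    ∃ f' f'', HasHessian (fun ζ : ℂ => log (N ^ 2 * ‖ζ - ζ₀‖ ^ 2 + 1)) f' f'' ∧
      ∀ ζ, f'' ζ 1 1 + f'' ζ Complex.I Complex.I = 4 * N ^ 2 / (N ^ 2 * ‖ζ - ζ₀‖ ^ 2 + 1) ^ 2 := by
  have hq := HasHessian.sq_add_sq_add (N • Complex.reCLM) (N • Complex.imCLM)
    (-N * ζ₀.re) (-N * ζ₀.im) 1
  have hqe (ζ : ℂ) : (-N * ζ₀.re + (N • Complex.reCLM) ζ) ^ 2 +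
      (-N * ζ₀.im + (N • Complex.imCLM) ζ) ^ 2 + 1 = N ^ 2 * ‖ζ - ζ₀‖ ^ 2 + 1 := by
    rw [Complex.sq_norm, Complex.normSq_apply]
    simp
    ring
  have hpos (ζ : ℂ) : 0 < N ^ 2 * ‖ζ - ζ₀‖ ^ 2 + 1 := by positivity
  have h1 : ∀ r ∈ Set.Ioi (0 : ℝ), HasDerivAt Real.log r⁻¹ r := fun r hr =>
    Real.hasDerivAt_log (ne_of_gt hr)
  have h2 : ∀ r ∈ Set.Ioi (0 : ℝ), HasDerivAt (fun x : ℝ => x⁻¹) (-(r ^ 2)⁻¹) r := fun r hr =>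
    hasDerivAt_inv (ne_of_gt hr)
  have h3 : ContinuousOn (fun r : ℝ => -(r ^ 2)⁻¹) (Set.Ioi 0) :=
    (ContinuousOn.inv₀ (by fun_prop) fun r hr => pow_ne_zero _ (ne_of_gt hr)).neg
  have hs := hq.scomp (s := Set.Ioi 0) (fun ζ => by rw [hqe]; exact hpos ζ) h1 h2 h3
  simp only [hqe] at hs
  refine ⟨_, _, hs, fun ζ => ?_⟩
  have h0 := hpos ζ
  have hqe' := hqe ζ
  set S := N ^ 2 * ‖ζ - ζ₀‖ ^ 2 + 1
  simp at hqe' ⊢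
  field_simp
  linear_combination (-4 * N ^ 2) * hqe'

end Extension

section Plurisubharmonic

variable {ω : ℝ × ℝ → ℝ}

theorem uExt_eq (ω : ℝ × ℝ → ℝ) (σ : ℝ) (z : ℂ × ℂ) :
    uExt ω σ z = (1 / π) * (∫ t : ℝ, ω (rePart z + t • imPart z) / (1 + t ^ 2))
      + σ * √(z.1.im ^ 2 + z.2.im ^ 2) := rfl

theorem psh_iff_two_pi_mul_le {u : ℂ × ℂ → ℝ} :
    Psh u ↔ ∀ z v : ℂ × ℂ,
      2 * π * u z ≤ ∫ θ in (0:ℝ)..(2 * π), u (z + Complex.exp (θ * Complex.I) • v) := by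
  refine forall₂_congr fun z v => ?_
  rw [one_div, ← div_eq_inv_mul, le_div_iff₀ (by positivity), mul_comm]

theorem continuous_uExt (hω : Continuous ω) (hs : HasCompactSupport ω) :
    Continuous fun p : ℝ × ℂ × ℂ => uExt ω p.1 p.2 := by
  obtain ⟨B, hB⟩ := hs.exists_bound_of_continuous hω
  have hE : Continuous fun z : ℂ × ℂ =>
      ∫ t : ℝ, ω (z.1.re + t * z.1.im, z.2.re + t * z.2.im) / (1 + t ^ 2) := by
    refine continuous_of_dominated (bound := fun t : ℝ => B * (1 + t ^ 2)⁻¹) (fun z => ?_)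
      (fun z => .of_forall fun t => ?_) (integrable_inv_one_add_sq.const_mul B)
      (.of_forall fun t => ?_)
    · exact (Continuous.div (by fun_prop) (by fun_prop)
        fun t => by positivity).aestronglyMeasurable
    · rw [norm_div, div_eq_mul_inv, norm_of_nonneg (by positivity : 0 ≤ 1 + t ^ 2)]
      gcongr
      exact hB _
    · fun_prop
  unfold uExt
  exact ((hE.comp continuous_snd).const_mul _).add (by fun_prop)

theorem abs_integral_sub_truncated_le {g : ℝ → ℝ} {B N : ℝ} (hg : Continuous g)
    (hB : ∀ t, |g t| ≤ B) (hN : 0 ≤ N) :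
    |(∫ t in -N..N, g t / (1 + t ^ 2)) - ∫ t, g t / (1 + t ^ 2)| ≤ B * (π - 2 * arctan N) := by
  have hkB : Integrable fun t : ℝ => B * (1 + t ^ 2)⁻¹ := integrable_inv_one_add_sq.const_mul B
  have hb (t : ℝ) : |g t / (1 + t ^ 2)| ≤ B * (1 + t ^ 2)⁻¹ := by
    rw [abs_div, div_eq_mul_inv, abs_of_nonneg (by positivity : 0 ≤ 1 + t ^ 2)]
    gcongr
    exact hB t
  have hgi : Integrable fun t : ℝ => g t / (1 + t ^ 2) :=
    hkB.mono' (Continuous.div hg (by fun_prop) fun t => by positivity).aestronglyMeasurable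
      (.of_forall hb)
  have hsum : (∫ t in -N..N, B * (1 + t ^ 2)⁻¹) = B * (2 * arctan N) := by
    rw [intervalIntegral.integral_const_mul, integral_inv_one_add_sq, arctan_neg]
    ring
  have htot : ∫ t : ℝ, B * (1 + t ^ 2)⁻¹ = B * π := by
    rw [integral_const_mul, integral_univ_inv_one_add_sq]
  have hle : -N ≤ N := by linarith
  have h1 := setIntegral_le_integral (s := Set.Ioc (-N) N) (hkB.sub hgi)
    (.of_forall fun t => sub_nonneg.2 (abs_le.1 (hb t)).2)
  have h2 := setIntegral_le_integral (s := Set.Ioc (-N) N) (hkB.add hgi)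
    (.of_forall fun t => neg_le_iff_add_nonneg'.1 (abs_le.1 (hb t)).1)
  rw [← intervalIntegral.integral_of_le hle] at h1 h2
  simp only [Pi.sub_apply, Pi.add_apply] at h1 h2
  rw [intervalIntegral.integral_sub hkB.intervalIntegrable hgi.intervalIntegrable,
    integral_sub hkB hgi, hsum, htot] at h1
  rw [intervalIntegral.integral_add hkB.intervalIntegrable hgi.intervalIntegrable,
    integral_add hkB hgi, hsum, htot] at h2
  rw [abs_le]
  constructor <;> linarith

theorem intervalIntegral_eq_integral_of_eq_zero {g : ℝ → ℝ} {N : ℝ}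
    (h : ∀ t, N ≤ |t| → g t = 0) : ∫ t in -N..N, g t = ∫ t, g t := by
  refine intervalIntegral.integral_eq_integral_of_support_subset fun t ht => ?_
  have h1 : |t| < N := not_le.1 fun hN => ht (h t hN)
  exact ⟨(abs_lt.1 h1).1, (abs_lt.1 h1).2.le⟩

theorem xray_lap_nonneg_of_psh (hω : ContDiff ℝ 2 ω) (hs : HasCompactSupport ω) {σ : ℝ}
    (h : Psh (uExt ω σ)) (s θ : ℝ) : 0 ≤ xray (lap ω) s θ + π * σ := by
  rw [psh_iff_two_pi_mul_le] at h
  have hcs := sin_sq_add_cos_sq θ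
  set z : ℂ × ℂ := (⟨-(s * sin θ), cos θ⟩, ⟨s * cos θ, sin θ⟩) with hz
  set v : ℂ × ℂ := ((-sin θ : ℝ), (cos θ : ℝ)) with hv
  have hY (ζ : ℂ) : (z + ζ • v).1.im ^ 2 + (z + ζ • v).2.im ^ 2 + 0 = 1 + ζ.im ^ 2 := by
    simp [hz, hv, -Complex.ofReal_sin, -Complex.ofReal_cos, -Complex.ofReal_neg]
    linear_combination (1 + ζ.im ^ 2) * hcs
  have hdot (ζ : ℂ) (t : ℝ) : (rePart (z + ζ • v) + t • imPart (z + ζ • v)).1 * cos θ +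
      (rePart (z + ζ • v) + t • imPart (z + ζ • v)).2 * sin θ = t := by
    simp [hz, hv, -Complex.ofReal_sin, -Complex.ofReal_cos, -Complex.ofReal_neg]
    linear_combination t * hcs
  have hfar {R : ℝ} (p : ℝ × ℝ) (hp : 2 * R + 1 ≤ |p.1 * cos θ + p.2 * sin θ|) : R < ‖p‖ := by
    have h1 := abs_add_le (p.1 * cos θ) (p.2 * sin θ)
    rw [abs_mul, abs_mul] at h1
    have h2 := mul_le_of_le_one_right (abs_nonneg p.1) (abs_cos_le_one θ)
    have h3 := mul_le_of_le_one_right (abs_nonneg p.2) (abs_sin_le_one θ)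
    have h4 := norm_fst_le p
    have h5 := norm_snd_le p
    rw [Real.norm_eq_abs] at h4 h5
    linarith
  obtain ⟨R₁, -, hR₁⟩ := hs.exists_eq_zero_of_norm_gt
  obtain ⟨R₂, -, hR₂⟩ := ((hs.fderiv ℝ).fderiv ℝ).exists_eq_zero_of_norm_gt
  set N := 2 * max R₁ R₂ + 1 with hN
  obtain ⟨f', f'', hf, hL⟩ := exists_hessian_truncated hω N z v
  obtain ⟨g', g'', hg, hM⟩ := exists_hessian_sqrt 0 z v fun ζ => by rw [hY]; positivity
  have hu (ζ : ℂ) : 1 / π * (∫ t in -N..N,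
      ω (rePart (z + ζ • v) + t • imPart (z + ζ • v)) / (1 + t ^ 2)) +
      σ * √((z + ζ • v).1.im ^ 2 + (z + ζ • v).2.im ^ 2 + 0) = uExt ω σ (z + ζ • v) := by
    rw [uExt_eq, add_zero, intervalIntegral_eq_integral_of_eq_zero fun t ht => ?_]
    rw [← hdot ζ t] at ht
    rw [hR₁ _ ((le_max_left _ _).trans_lt (hfar _ ht)), zero_div]
  have hpos := ((hf.const_mul (1 / π)).add (hg.const_mul σ)).laplacian_nonneg_of_submean
    fun r hr => by
      simp only [hu]
      have := h z ((r : ℂ) • v)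
      simp only [smul_smul] at this
      simpa only [zero_smul, add_zero, mul_comm (r : ℂ)] using this
  have hL0 := hL 0
  have hM0 := hM 0
  rw [hY] at hM0
  have him : imPart v = 0 := by
    simp [hv, -Complex.ofReal_sin, -Complex.ofReal_cos, -Complex.ofReal_neg]
  have hre : rePart v = (-sin θ, cos θ) := by
    simp [hv, -Complex.ofReal_sin, -Complex.ofReal_cos, -Complex.ofReal_neg]
  rw [intervalIntegral_eq_integral_of_eq_zero fun t ht => by
    rw [← hdot 0 t] at ht
    rw [hR₂ _ ((le_max_right _ _).trans_lt (hfar _ ht))]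
    simp] at hL0
  have hpt (t : ℝ) : rePart (z + (0 : ℂ) • v) + t • imPart (z + (0 : ℂ) • v) =
      (t * cos θ - s * sin θ, t * sin θ + s * cos θ) := by
    ext <;> simp [hz] <;> ring
  simp only [hpt, him, hre, map_zero, add_zero,
    integral_hessian_line hω hs s θ] at hL0
  have h1 : (z + (0 : ℂ) • v).1.im = cos θ := by simp [hz]
  have h2 : (z + (0 : ℂ) • v).2.im = sin θ := by simp [hz]
  have hM1 : g'' 0 1 1 + g'' 0 Complex.I Complex.I = 1 := by
    rw [hM0, h1, h2]
    simp [hv, -Complex.ofReal_sin, -Complex.ofReal_cos, -Complex.ofReal_neg]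
    ring
  have hL1 : f'' 0 1 1 + f'' 0 Complex.I Complex.I = xray (lap ω) s θ := by
    rw [hL0]
    linear_combination (1 + sin θ ^ 2 + cos θ ^ 2) * xray (lap ω) s θ * hcs
  simp only [add_apply, smul_apply, smul_eq_mul] at hpos
  have : 0 ≤ 1 / π * xray (lap ω) s θ + σ := by
    rw [← hL1]
    linear_combination hpos + σ * hM1
  have h3 := mul_nonneg pi_pos.le this
  rwa [mul_add, ← mul_assoc, mul_one_div_cancel pi_ne_zero, one_mul] at h3

end Plurisubharmonic

section Sufficiency

variable {ω : ℝ × ℝ → ℝ}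

theorem sqrt_laplacian_lower_bound {a₁ a₂ b₁ b₂ y₁ y₂ d σ σ' : ℝ} (hy : 0 < y₁ ^ 2 + y₂ ^ 2)
    (hd : 0 ≤ d) (hσ' : 0 ≤ σ') (h : σ * √(y₁ ^ 2 + y₂ ^ 2 + d) ≤ σ' * √(y₁ ^ 2 + y₂ ^ 2)) :
    σ * (((a₂ * y₁ - a₁ * y₂) ^ 2 + (b₂ * y₁ - b₁ * y₂) ^ 2) / √(y₁ ^ 2 + y₂ ^ 2) ^ 3) ≤
      σ' * (((a₁ ^ 2 + a₂ ^ 2 + b₁ ^ 2 + b₂ ^ 2) * (y₁ ^ 2 + y₂ ^ 2 + d)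
        - (a₁ * y₁ + a₂ * y₂) ^ 2 - (b₁ * y₁ + b₂ * y₂) ^ 2) / √(y₁ ^ 2 + y₂ ^ 2 + d) ^ 3) := by
  have hr : 0 < √(y₁ ^ 2 + y₂ ^ 2) := sqrt_pos.2 hy
  have hq : 0 < √(y₁ ^ 2 + y₂ ^ 2 + d) := sqrt_pos.2 (by linarith)
  have hr2 := sq_sqrt hy.le
  have hq2 := sq_sqrt (by linarith : 0 ≤ y₁ ^ 2 + y₂ ^ 2 + d)
  set r := √(y₁ ^ 2 + y₂ ^ 2)
  set q := √(y₁ ^ 2 + y₂ ^ 2 + d)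
  set P := (a₂ * y₁ - a₁ * y₂) ^ 2 + (b₂ * y₁ - b₁ * y₂) ^ 2 with hP
  set n := (a₁ ^ 2 + a₂ ^ 2 + b₁ ^ 2 + b₂ ^ 2) * (y₁ ^ 2 + y₂ ^ 2 + d)
        - (a₁ * y₁ + a₂ * y₂) ^ 2 - (b₁ * y₁ + b₂ * y₂) ^ 2 with hn
  have hnum : P * q ^ 2 ≤ n * r ^ 2 := by
    rw [hr2, hq2, hP, hn]
    have : 0 ≤ d * ((a₁ * y₁ + a₂ * y₂) ^ 2 + (b₁ * y₁ + b₂ * y₂) ^ 2) := by positivity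
    linear_combination this
  have hP0 : 0 ≤ P := by positivity
  rw [← mul_div_assoc, ← mul_div_assoc, div_le_div_iff₀ (by positivity) (by positivity)]
  calc σ * P * q ^ 3 = σ * q * (P * q ^ 2) := by ring
    _ ≤ σ' * r * (P * q ^ 2) := by gcongr
    _ ≤ σ' * r * (n * r ^ 2) := by gcongr
    _ = σ' * n * r ^ 3 := by ring

theorem exists_zero_imPart_line (z v : ℂ × ℂ) (hD : v.1.re * v.2.im - v.2.re * v.1.im ≠ 0) :
    ∃ ζ₀ : ℂ, ∀ ζ : ℂ, (v.1.re * v.2.im - v.2.re * v.1.im) ^ 2 * ‖ζ - ζ₀‖ ^ 2 ≤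
      (v.1.re ^ 2 + v.2.re ^ 2 + v.1.im ^ 2 + v.2.im ^ 2) *
        ((z + ζ • v).1.im ^ 2 + (z + ζ • v).2.im ^ 2) := by
  set D := v.1.re * v.2.im - v.2.re * v.1.im with hDdef
  refine ⟨⟨(z.1.im * v.2.re - z.2.im * v.1.re) / D, (z.2.im * v.1.im - z.1.im * v.2.im) / D⟩,
    fun ζ => ?_⟩
  set Y₁ := (z + ζ • v).1.im with hY₁
  set Y₂ := (z + ζ • v).2.im with hY₂
  have e1 : D * (ζ.re - (z.1.im * v.2.re - z.2.im * v.1.re) / D) =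
      v.1.re * Y₂ - v.2.re * Y₁ := by
    rw [mul_sub, mul_div_cancel₀ _ hD]
    simp [hY₁, hY₂, hDdef]
    ring
  have e2 : D * (ζ.im - (z.2.im * v.1.im - z.1.im * v.2.im) / D) =
      v.2.im * Y₁ - v.1.im * Y₂ := by
    rw [mul_sub, mul_div_cancel₀ _ hD]
    simp [hY₁, hY₂, hDdef]
    ring
  rw [Complex.sq_norm, Complex.normSq_apply, Complex.sub_re, Complex.sub_im]
  calc _ = (v.1.re * Y₂ - v.2.re * Y₁) ^ 2 + (v.2.im * Y₁ - v.1.im * Y₂) ^ 2 := by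
        rw [← e1, ← e2]; ring
    _ ≤ _ := by nlinarith [sq_nonneg (v.1.re * Y₁ + v.2.re * Y₂),
        sq_nonneg (v.1.im * Y₁ + v.2.im * Y₂)]

/-- A `C²` approximation of `uExt ω σ'` along a complex line: the integral is truncated to
`[-N, N]`, the modulus is smoothed, and a small multiple of a logarithm compensates for the
truncation. -/
def lineApprox (ω : ℝ × ℝ → ℝ) (σ' K N d : ℝ) (ζ₀ : ℂ) (z v : ℂ × ℂ) (ζ : ℂ) : ℝ :=
  1 / π * (∫ t in -N..N, ω (rePart (z + ζ • v) + t • imPart (z + ζ • v)) / (1 + t ^ 2))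
    + σ' * √((z + ζ • v).1.im ^ 2 + (z + ζ • v).2.im ^ 2 + d)
    + K / N * log (N ^ 2 * ‖ζ - ζ₀‖ ^ 2 + 1)

theorem hessian_line_far (hω : ContDiff ℝ 2 ω) (hs : HasCompactSupport ω) {σ : ℝ}
    (h : ∀ s θ, 0 ≤ xray (lap ω) s θ + π * σ) (a b x : ℝ × ℝ) {y : ℝ × ℝ} (hy : y ≠ 0) :
    -(σ * (((a.2 * y.1 - a.1 * y.2) ^ 2 + (b.2 * y.1 - b.1 * y.2) ^ 2)
        / √(y.1 ^ 2 + y.2 ^ 2) ^ 3)) ≤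
      1 / π * ∫ t : ℝ, (fderiv ℝ (fderiv ℝ ω) (x + t • y) a a
        + fderiv ℝ (fderiv ℝ ω) (x + t • y) b b) := by
  obtain ⟨s, θ, hT⟩ := exists_integral_hessian_line_eq hω hs x hy
  rw [integral_add (integrable_hessian_line hω hs x hy a a)
    (integrable_hessian_line hω hs x hy b b), hT, hT, ← add_mul, ← add_div]
  set P := ((a.2 * y.1 - a.1 * y.2) ^ 2 + (b.2 * y.1 - b.1 * y.2) ^ 2) / √(y.1 ^ 2 + y.2 ^ 2) ^ 3
  have hP : 0 ≤ P := by positivity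
  have h1 : 0 ≤ 1 / π * P * (xray (lap ω) s θ + π * σ) := mul_nonneg (by positivity) (h s θ)
  have h2 : 1 / π * P * (π * σ) = σ * P := by field_simp
  linarith

theorem sqrt_laplacian_nonneg {a₁ a₂ b₁ b₂ y₁ y₂ d : ℝ} (hd : 0 ≤ d) :
    0 ≤ ((a₁ ^ 2 + a₂ ^ 2 + b₁ ^ 2 + b₂ ^ 2) * (y₁ ^ 2 + y₂ ^ 2 + d)
      - (a₁ * y₁ + a₂ * y₂) ^ 2 - (b₁ * y₁ + b₂ * y₂) ^ 2) / √(y₁ ^ 2 + y₂ ^ 2 + d) ^ 3 := by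
  refine div_nonneg ?_ (by positivity)
  have : 0 ≤ (a₁ ^ 2 + a₂ ^ 2 + b₁ ^ 2 + b₂ ^ 2) * d + (a₂ * y₁ - a₁ * y₂) ^ 2
      + (b₂ * y₁ - b₁ * y₂) ^ 2 := by positivity
  linear_combination this

theorem norm_le_sqrt_sq_add_sq (y : ℝ × ℝ) : ‖y‖ ≤ √(y.1 ^ 2 + y.2 ^ 2) := by
  rw [Prod.norm_def, max_le_iff]
  exact ⟨abs_le_sqrt (by linarith [sq_nonneg y.2]), abs_le_sqrt (by linarith [sq_nonneg y.1])⟩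

theorem sqrt_add_sq_le {r δ : ℝ} (hr : 0 ≤ r) (hδ : 0 ≤ δ) : √(r + δ ^ 2) ≤ √r + δ := by
  refine sqrt_le_iff.2 ⟨by positivity, ?_⟩
  linear_combination 2 * mul_nonneg (sqrt_nonneg r) hδ - sq_sqrt hr

theorem mul_sqrt_add_sq_le {σ σ' δ m r : ℝ} (hσ : 0 ≤ σ) (hσσ' : σ ≤ σ') (hδ : 0 ≤ δ)
    (h : σ * δ ≤ (σ' - σ) * m) (hr : 0 ≤ r) (hm : m ≤ √r) : σ * √(r + δ ^ 2) ≤ σ' * √r := by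
  have e1 := mul_le_mul_of_nonneg_left (sqrt_add_sq_le hr hδ) hσ
  have e2 := mul_le_mul_of_nonneg_left hm (sub_nonneg.2 hσσ')
  linarith

theorem laplacian_nonneg_far (hω : ContDiff ℝ 2 ω) (hs : HasCompactSupport ω) {σ σ' : ℝ}
    (h : ∀ s θ, 0 ≤ xray (lap ω) s θ + π * σ) (hσ : 0 ≤ σ) (hσσ' : σ ≤ σ') (a b x : ℝ × ℝ)
    {y : ℝ × ℝ} {R N c δ : ℝ} (hR : ∀ p, R < ‖p‖ → fderiv ℝ (fderiv ℝ ω) p = 0) (hN : 0 < N)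
    (hc : 0 < c) (hx : R + ‖x‖ < c) (hy : c / N ≤ ‖y‖) (hδ : 0 ≤ δ)
    (hδc : σ * δ ≤ (σ' - σ) * (c / N)) :
    0 ≤ 1 / π * (∫ t in -N..N, (fderiv ℝ (fderiv ℝ ω) (x + t • y) a a
        + fderiv ℝ (fderiv ℝ ω) (x + t • y) b b))
      + σ' * (((a.1 ^ 2 + a.2 ^ 2 + b.1 ^ 2 + b.2 ^ 2) * (y.1 ^ 2 + y.2 ^ 2 + δ ^ 2)
        - (a.1 * y.1 + a.2 * y.2) ^ 2 - (b.1 * y.1 + b.2 * y.2) ^ 2)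
        / √(y.1 ^ 2 + y.2 ^ 2 + δ ^ 2) ^ 3) := by
  have hy0 : y ≠ 0 := norm_pos_iff.1 ((by positivity : 0 < c / N).trans_le hy)
  have hyy := norm_le_sqrt_sq_add_sq y
  have hypos : 0 < y.1 ^ 2 + y.2 ^ 2 := sqrt_pos.1 ((norm_pos_iff.2 hy0).trans_le hyy)
  have hzero (t : ℝ) (ht : N ≤ |t|) : fderiv ℝ (fderiv ℝ ω) (x + t • y) = 0 := by
    apply hR
    have e2 := norm_sub_le (x + t • y) x
    rw [add_sub_cancel_left, norm_smul, Real.norm_eq_abs] at e2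
    have e3 : c ≤ |t| * ‖y‖ := by
      calc c = N * (c / N) := by field_simp
        _ ≤ |t| * ‖y‖ := by gcongr
    linarith
  rw [intervalIntegral_eq_integral_of_eq_zero fun t ht => by simp [hzero t ht]]
  have h1 := hessian_line_far hω hs h a b x hy0
  have h2 := sqrt_laplacian_lower_bound (a₁ := a.1) (a₂ := a.2) (b₁ := b.1)
    (b₂ := b.2) hypos (sq_nonneg δ) (hσ.trans hσσ')
    (mul_sqrt_add_sq_le hσ hσσ' hδ hδc hypos.le (hy.trans hyy))
  linarith

theorem truncated_laplacian_ge {g : ℝ → ℝ} {M N : ℝ} (hM : ∀ t, ‖g t‖ ≤ M) (hN : 0 < N) :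
    -(4 * M * N) ≤ 1 / π * ∫ t in -N..N, g t := by
  have hM0 : 0 ≤ M := (norm_nonneg _).trans (hM 0)
  have hb := intervalIntegral.norm_integral_le_of_norm_le_const (a := -N) (b := N)
    (f := g) fun t _ => hM t
  rw [Real.norm_eq_abs, abs_of_pos (by linarith : 0 < N - -N),
    (by ring : N - -N = 2 * N)] at hb
  have hpi : 1 / π ≤ 1 := (div_le_one pi_pos).2 (by linarith [pi_gt_three])
  have e1 := mul_le_mul_of_nonneg_left (abs_le.1 hb).1 (by positivity : 0 ≤ 1 / π)
  have e2 := mul_le_mul_of_nonneg_right hpi (by positivity : 0 ≤ M * (2 * N))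
  linarith [mul_nonneg hM0 hN.le]

theorem log_laplacian_ge {M N c D S r κ : ℝ} {y : ℝ × ℝ} (hM : 0 ≤ M) (hN : 0 < N) (hD : D ≠ 0)
    (hS : 0 ≤ S) (hκ : κ = S * (2 * c ^ 2) / D ^ 2) (hy : ‖y‖ ≤ c / N)
    (hr : D ^ 2 * r ^ 2 ≤ S * (y.1 ^ 2 + y.2 ^ 2)) :
    4 * M * N ≤ M * (κ + 1) ^ 2 / N * (4 * N ^ 2 / (N ^ 2 * r ^ 2 + 1) ^ 2) := by
  have hκ0 : 0 ≤ κ := by rw [hκ]; positivity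
  have hyn : (y.1 ^ 2 + y.2 ^ 2) * N ^ 2 ≤ 2 * c ^ 2 := by
    have e1 := (norm_fst_le y).trans hy
    have e2 := (norm_snd_le y).trans hy
    rw [Real.norm_eq_abs, le_div_iff₀ hN, ← abs_of_pos hN, ← abs_mul] at e1 e2
    have e3 := sq_le_sq' (neg_le_of_abs_le e1) (le_of_abs_le e1)
    have e4 := sq_le_sq' (neg_le_of_abs_le e2) (le_of_abs_le e2)
    rw [mul_pow] at e3 e4
    linarith
  have hq : N ^ 2 * r ^ 2 ≤ κ := by
    rw [hκ, le_div_iff₀ (by positivity)]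
    calc N ^ 2 * r ^ 2 * D ^ 2 = N ^ 2 * (D ^ 2 * r ^ 2) := by ring
      _ ≤ N ^ 2 * (S * (y.1 ^ 2 + y.2 ^ 2)) := by gcongr
      _ = S * ((y.1 ^ 2 + y.2 ^ 2) * N ^ 2) := by ring
      _ ≤ S * (2 * c ^ 2) := by gcongr
  calc 4 * M * N = M * (κ + 1) ^ 2 / N * (4 * N ^ 2 / (κ + 1) ^ 2) := by field_simp
    _ ≤ _ := by gcongr

theorem exists_lineApprox_submean (hω : ContDiff ℝ 2 ω) (hs : HasCompactSupport ω) {σ σ' : ℝ}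
    (h : ∀ s θ, 0 ≤ xray (lap ω) s θ + π * σ) (hσ : 0 ≤ σ) (hσσ' : σ < σ') (z v : ℂ × ℂ)
    (hD : v.1.re * v.2.im - v.2.re * v.1.im ≠ 0) :
    ∃ (K c : ℝ) (ζ₀ : ℂ), 0 ≤ K ∧ 0 < c ∧ ∀ N δ : ℝ, 0 < N → 0 < δ →
      σ * δ ≤ (σ' - σ) * (c / N) →
      Continuous (lineApprox ω σ' K N (δ ^ 2) ζ₀ z v) ∧
      2 * π * lineApprox ω σ' K N (δ ^ 2) ζ₀ z v 0 ≤
        ∫ θ in (0:ℝ)..(2 * π),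
          lineApprox ω σ' K N (δ ^ 2) ζ₀ z v (Complex.exp (θ * Complex.I)) := by
  obtain ⟨ζ₀, hζ₀⟩ := exists_zero_imPart_line z v hD
  have hHc := hω.hasHessian.cont
  obtain ⟨M, hM⟩ := HasCompactSupport.exists_bound_of_continuous
    (f := fun p => fderiv ℝ (fderiv ℝ ω) p (rePart v) (rePart v)
      + fderiv ℝ (fderiv ℝ ω) p (imPart v) (imPart v))
    (((hs.fderiv ℝ).fderiv ℝ).comp_left
      (g := fun B : ℝ × ℝ →L[ℝ] ℝ × ℝ →L[ℝ] ℝ =>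
        B (rePart v) (rePart v) + B (imPart v) (imPart v)) (by simp)) (by fun_prop)
  have hM0 : 0 ≤ M := (norm_nonneg _).trans (hM 0)
  obtain ⟨R, hR0, hR⟩ := ((hs.fderiv ℝ).fderiv ℝ).exists_eq_zero_of_norm_gt
  set l : ℂ →L[ℝ] ℝ × ℝ := rePart.comp (complexLine v) with hl
  set c : ℝ := R + (‖rePart z‖ + ‖l‖) + 1 with hc
  have hX (ζ : ℂ) (hζ : ‖ζ‖ ≤ 1) : ‖rePart (z + ζ • v)‖ ≤ ‖rePart z‖ + ‖l‖ := by
    have e : rePart (z + ζ • v) = rePart z + l ζ := by rw [map_add]; rfl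
    rw [e]
    refine (norm_add_le _ _).trans (add_le_add_right ?_ _)
    exact (l.le_opNorm ζ).trans (mul_le_of_le_one_right (norm_nonneg _) hζ)
  have hc0 : 0 < c := by positivity
  set D := v.1.re * v.2.im - v.2.re * v.1.im with hDdef
  set S := v.1.re ^ 2 + v.2.re ^ 2 + v.1.im ^ 2 + v.2.im ^ 2 with hS
  have hS0 : 0 ≤ S := by positivity
  set κ := S * (2 * c ^ 2) / D ^ 2 with hκ
  have hκ0 : 0 ≤ κ := by positivity
  refine ⟨M * (κ + 1) ^ 2, c, ζ₀, by positivity, hc0, fun N δ hN hδ hδc => ?_⟩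
  obtain ⟨f', f'', hf, hL⟩ := exists_hessian_truncated hω N z v
  obtain ⟨g', g'', hg, hG⟩ := exists_hessian_sqrt (δ ^ 2) z v fun ζ => by positivity
  obtain ⟨k', k'', hk, hK⟩ := exists_hessian_log N ζ₀
  have hH := ((hf.const_mul (1 / π)).add (hg.const_mul σ')).add
    (hk.const_mul (M * (κ + 1) ^ 2 / N))
  refine ⟨hH.continuous, ?_⟩
  have hsub := hH.circle_submean one_pos fun ζ hζ => ?_
  · simp only [Complex.ofReal_one, one_mul] at hsub
    exact hsub
  have hlap : ∀ A B C : ℝ, f'' ζ 1 1 + f'' ζ Complex.I Complex.I = A →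
      g'' ζ 1 1 + g'' ζ Complex.I Complex.I = B → k'' ζ 1 1 + k'' ζ Complex.I Complex.I = C →
      0 ≤ 1 / π * A + σ' * B + M * (κ + 1) ^ 2 / N * C →
      0 ≤ ((1 / π) • f'' ζ + σ' • g'' ζ + (M * (κ + 1) ^ 2 / N) • k'' ζ) 1 1 +
        ((1 / π) • f'' ζ + σ' • g'' ζ + (M * (κ + 1) ^ 2 / N) • k'' ζ) Complex.I Complex.I := by
    intro A B C hA hB hC hABC
    simp only [add_apply, smul_apply, smul_eq_mul]
    rw [← hA, ← hB, ← hC] at hABC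
    linear_combination hABC
  refine hlap _ _ _ (hL ζ) (hG ζ) (hK ζ) ?_
  have hσ' : 0 < σ' := hσ.trans_lt hσσ'
  have hlog : 0 ≤ M * (κ + 1) ^ 2 / N * (4 * N ^ 2 / (N ^ 2 * ‖ζ - ζ₀‖ ^ 2 + 1) ^ 2) := by
    positivity
  rcases le_or_gt (c / N) ‖imPart (z + ζ • v)‖ with hfar | hnear
  · have h1 := laplacian_nonneg_far hω hs h hσ hσσ'.le (rePart v) (imPart v)
      (rePart (z + ζ • v)) hR hN hc0 (by linarith [hX ζ hζ]) hfar hδ.le hδc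
    exact add_nonneg h1 hlog
  · have h1 := truncated_laplacian_ge
      (fun t : ℝ => hM (rePart (z + ζ • v) + t • imPart (z + ζ • v))) hN
    have h2 := mul_nonneg hσ'.le (sqrt_laplacian_nonneg (a₁ := v.1.re) (a₂ := v.2.re)
      (b₁ := v.1.im) (b₂ := v.2.im) (y₁ := (z + ζ • v).1.im) (y₂ := (z + ζ • v).2.im)
      (sq_nonneg δ))
    have h3 := log_laplacian_ge hM0 hN hD hS0 hκ hnear.le (hζ₀ ζ)
    linarith

end Sufficiency

section Limit

variable {ω : ℝ × ℝ → ℝ}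

theorem log_pow_four_mul_add_one_le {M C r : ℝ} (hM : 1 ≤ M) (hr : 0 ≤ r) (hrC : r ≤ C) :
    log ((M ^ 2) ^ 2 * r ^ 2 + 1) ≤ 4 * (M * (C + 1)) := by
  have hM0 : 0 < M := one_pos.trans_le hM
  have hC : 0 ≤ C := hr.trans hrC
  have h1 : (M ^ 2) ^ 2 * r ^ 2 + 1 ≤ (M * (C + 1)) ^ 4 := by
    calc (M ^ 2) ^ 2 * r ^ 2 + 1 ≤ (M ^ 2) ^ 2 * C ^ 2 + (M ^ 2) ^ 2 := by
          gcongr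
          exact one_le_pow₀ (one_le_pow₀ hM)
      _ = M ^ 4 * (C ^ 2 + 1) := by ring
      _ ≤ M ^ 4 * (C + 1) ^ 4 := by
          gcongr
          nlinarith [pow_nonneg hC 3, pow_nonneg hC 4, pow_nonneg hC 2]
      _ = (M * (C + 1)) ^ 4 := by ring
  calc log ((M ^ 2) ^ 2 * r ^ 2 + 1) ≤ log ((M * (C + 1)) ^ 4) := log_le_log (by positivity) h1
    _ = 4 * log (M * (C + 1)) := by rw [log_pow]; norm_num
    _ ≤ 4 * (M * (C + 1)) := by
        gcongr
        exact log_le_self (by positivity)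

theorem lineApprox_bounds (hω : Continuous ω) {B : ℝ} (hB : ∀ p, ‖ω p‖ ≤ B) {σ' K M δ : ℝ}
    {ζ₀ ζ : ℂ} (z v : ℂ × ℂ) (hσ' : 0 ≤ σ') (hK : 0 ≤ K) (hM : 1 ≤ M) (hδ : 0 ≤ δ)
    (hζ : ‖ζ‖ ≤ 1) :
    uExt ω σ' (z + ζ • v) - 1 / π * (B * (π - 2 * arctan (M ^ 2)))
        ≤ lineApprox ω σ' K (M ^ 2) (δ ^ 2) ζ₀ z v ζ ∧
      lineApprox ω σ' K (M ^ 2) (δ ^ 2) ζ₀ z v ζ ≤ uExt ω σ' (z + ζ • v)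
        + (1 / π * (B * (π - 2 * arctan (M ^ 2))) + σ' * δ + 4 * K * (‖ζ₀‖ + 2) / M) := by
  have hM0 : 0 < M := one_pos.trans_le hM
  have h1 := abs_le.1 (abs_integral_sub_truncated_le (N := M ^ 2)
    (g := fun t => ω (rePart (z + ζ • v) + t • imPart (z + ζ • v))) (by fun_prop)
    (fun t => hB _) (by positivity))
  have h1l := mul_le_mul_of_nonneg_left h1.1 (by positivity : 0 ≤ 1 / π)
  have h1r := mul_le_mul_of_nonneg_left h1.2 (by positivity : 0 ≤ 1 / π)
  have h2l : √((z + ζ • v).1.im ^ 2 + (z + ζ • v).2.im ^ 2) ≤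
      √((z + ζ • v).1.im ^ 2 + (z + ζ • v).2.im ^ 2 + δ ^ 2) :=
    sqrt_le_sqrt (le_add_of_nonneg_right (sq_nonneg δ))
  have h2r := sqrt_add_sq_le (by positivity : 0 ≤ (z + ζ • v).1.im ^ 2 + (z + ζ • v).2.im ^ 2) hδ
  have h2l' := mul_le_mul_of_nonneg_left h2l hσ'
  have h2r' := mul_le_mul_of_nonneg_left h2r hσ'
  have h3l : 0 ≤ K / M ^ 2 * log ((M ^ 2) ^ 2 * ‖ζ - ζ₀‖ ^ 2 + 1) :=
    mul_nonneg (by positivity) (log_nonneg (le_add_of_nonneg_left (by positivity)))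
  have h3r : K / M ^ 2 * log ((M ^ 2) ^ 2 * ‖ζ - ζ₀‖ ^ 2 + 1) ≤ 4 * K * (‖ζ₀‖ + 2) / M := by
    have := log_pow_four_mul_add_one_le (C := ‖ζ₀‖ + 1) hM (norm_nonneg (ζ - ζ₀))
      (by linarith [norm_sub_le ζ ζ₀])
    calc K / M ^ 2 * log ((M ^ 2) ^ 2 * ‖ζ - ζ₀‖ ^ 2 + 1)
        ≤ K / M ^ 2 * (4 * (M * (‖ζ₀‖ + 1 + 1))) := by gcongr
      _ = 4 * K * (‖ζ₀‖ + 2) / M := by field_simp; ring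
  rw [uExt_eq]
  unfold lineApprox
  constructor <;> linarith

theorem uExt_submean_of_independent (hω : ContDiff ℝ 2 ω) (hs : HasCompactSupport ω) {σ σ' : ℝ}
    (h : ∀ s θ, 0 ≤ xray (lap ω) s θ + π * σ) (hσσ' : σ < σ') (z v : ℂ × ℂ)
    (hD : v.1.re * v.2.im - v.2.re * v.1.im ≠ 0) :
    2 * π * uExt ω σ' z ≤
      ∫ θ in (0:ℝ)..(2 * π), uExt ω σ' (z + Complex.exp (θ * Complex.I) • v) := by
  have hσ : 0 ≤ σ := by
    obtain ⟨s, hs0⟩ := exists_xray_lap_eq_zero hω hs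
    have := h s 0
    rw [hs0, zero_add] at this
    exact nonneg_of_mul_nonneg_right this pi_pos
  have hσ' : 0 < σ' := hσ.trans_lt hσσ'
  obtain ⟨K, c, ζ₀, hK, hc, hA⟩ := exists_lineApprox_submean hω hs h hσ hσσ' z v hD
  obtain ⟨B, hB⟩ := hs.exists_bound_of_continuous hω.continuous
  set k := (σ' - σ) * c / (σ + 1) with hk
  have hk0 : 0 < k := by
    have := sub_pos.2 hσσ'
    positivity
  set I := ∫ θ in (0:ℝ)..(2 * π), uExt ω σ' (z + Complex.exp (θ * Complex.I) • v) with hI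
  have hcu : Continuous fun θ : ℝ => uExt ω σ' (z + Complex.exp (θ * Complex.I) • v) :=
    (continuous_uExt hω.continuous hs).comp
      (g := fun p : ℝ × ℂ × ℂ => uExt ω p.1 p.2)
      (f := fun θ : ℝ => (σ', z + Complex.exp (θ * Complex.I) • v)) (by fun_prop)
  have key (M : ℝ) (hM : 1 ≤ M) : 2 * π * uExt ω σ' z ≤ I + 2 * π *
      (2 * (1 / π * (B * (π - 2 * arctan (M ^ 2)))) + σ' * (k / M ^ 2)
        + 4 * K * (‖ζ₀‖ + 2) / M) := by
    have hM0 : 0 < M := one_pos.trans_le hM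
    have hδ : 0 < k / M ^ 2 := by positivity
    have hδc : σ * (k / M ^ 2) ≤ (σ' - σ) * (c / M ^ 2) := by
      have : σ * k ≤ (σ' - σ) * c := by
        rw [hk, ← mul_div_assoc, div_le_iff₀ (by linarith)]
        nlinarith [mul_pos (sub_pos.2 hσσ') hc]
      calc σ * (k / M ^ 2) = σ * k / M ^ 2 := (mul_div_assoc _ _ _).symm
        _ ≤ (σ' - σ) * c / M ^ 2 := by gcongr
        _ = (σ' - σ) * (c / M ^ 2) := mul_div_assoc _ _ _
    obtain ⟨hcont, hsub⟩ := hA (M ^ 2) (k / M ^ 2) (by positivity) hδ hδc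
    have h0 := (lineApprox_bounds (ζ₀ := ζ₀) hω.continuous hB z v hσ'.le hK hM hδ.le
      (norm_zero.trans_le zero_le_one : ‖(0 : ℂ)‖ ≤ 1)).1
    have h1 := intervalIntegral.integral_mono_on (μ := volume) two_pi_pos.le
      (f := fun θ : ℝ => lineApprox ω σ' K (M ^ 2) ((k / M ^ 2) ^ 2) ζ₀ z v
        (Complex.exp (θ * Complex.I)))
      (g := fun θ : ℝ => uExt ω σ' (z + Complex.exp (θ * Complex.I) • v)
        + (1 / π * (B * (π - 2 * arctan (M ^ 2))) + σ' * (k / M ^ 2)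
          + 4 * K * (‖ζ₀‖ + 2) / M))
      ((hcont.comp (by fun_prop)).intervalIntegrable _ _)
      ((hcu.add continuous_const).intervalIntegrable _ _)
      fun θ _ => (lineApprox_bounds (ζ₀ := ζ₀) hω.continuous hB z v hσ'.le hK hM hδ.le
        (Complex.norm_exp_ofReal_mul_I θ).le).2
    rw [intervalIntegral.integral_add (hcu.intervalIntegrable _ _)
      (continuous_const.intervalIntegrable _ _), intervalIntegral.integral_const, sub_zero,
      smul_eq_mul, ← hI] at h1
    rw [zero_smul, add_zero] at h0
    have h2 := mul_le_mul_of_nonneg_left h0 two_pi_pos.le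
    linarith
  have hlim : Filter.Tendsto (fun M : ℝ => I + 2 * π *
      (2 * (1 / π * (B * (π - 2 * arctan (M ^ 2)))) + σ' * (k / M ^ 2)
        + 4 * K * (‖ζ₀‖ + 2) / M)) Filter.atTop (nhds (I + 2 * π *
      (2 * (1 / π * (B * (π - 2 * (π / 2)))) + σ' * 0 + 0))) := by
    have hsq : Filter.Tendsto (fun M : ℝ => M ^ 2) Filter.atTop Filter.atTop :=
      Filter.tendsto_pow_atTop two_ne_zero
    have hat : Filter.Tendsto (fun M : ℝ => arctan (M ^ 2)) Filter.atTop (nhds (π / 2)) :=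
      (tendsto_nhds_of_tendsto_nhdsWithin tendsto_arctan_atTop).comp hsq
    exact ((((((hat.const_mul 2).const_sub π).const_mul B).const_mul (1 / π)).const_mul 2).add
      ((hsq.const_div_atTop k).const_mul σ') |>.add
        (Filter.tendsto_id.const_div_atTop _)).const_mul _ |>.const_add I
  refine (ge_of_tendsto hlim (Filter.eventually_atTop.2 ⟨1, key⟩)).trans_eq ?_
  ring

theorem psh_uExt_of_xray_lap_nonneg (hω : ContDiff ℝ 2 ω) (hs : HasCompactSupport ω) {σ : ℝ}
    (h : ∀ s θ, 0 ≤ xray (lap ω) s θ + π * σ) : Psh (uExt ω σ) := by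
  rw [psh_iff_two_pi_mul_le]
  intro z v
  have hu := continuous_uExt hω.continuous hs
  set D : ℝ → ℝ := fun s =>
    (v.1.re + s) * (v.2.im + s) - v.2.re * v.1.im with hDdef
  have hdense : Dense {s : ℝ | D s ≠ 0} := by
    have hne : (Polynomial.X ^ 2 + Polynomial.C (v.1.re + v.2.im) * Polynomial.X
        + Polynomial.C (v.1.re * v.2.im - v.2.re * v.1.im) : Polynomial ℝ) ≠ 0 := by
      intro h0
      have := congrArg (fun p => p.coeff 2) h0
      simp at this
    refine Dense.mono ?_ ((Polynomial.finite_setOfPred_isRoot hne).countable.dense_compl ℝ)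
    intro s hs h0
    refine hs ?_
    simp only [hDdef] at h0
    simp only [Set.mem_ofPred_eq, Polynomial.IsRoot, Polynomial.eval_add, Polynomial.eval_mul,
      Polynomial.eval_pow, Polynomial.eval_X, Polynomial.eval_C]
    linear_combination h0
  set V : ℝ → ℂ × ℂ := fun s => v + ((s : ℂ), s * Complex.I) with hV
  have hclosed : IsClosed {p : ℝ × ℝ | 2 * π * uExt ω p.1 z ≤
      ∫ θ in (0:ℝ)..(2 * π), uExt ω p.1 (z + Complex.exp (θ * Complex.I) • V p.2)} := by
    refine isClosed_le ?_ ?_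
    · exact continuous_const.mul (hu.comp (f := fun p : ℝ × ℝ => (p.1, z)) (by fun_prop))
    · refine intervalIntegral.continuous_parametric_intervalIntegral_of_continuous'
        (f := fun (p : ℝ × ℝ) (θ : ℝ) =>
          uExt ω p.1 (z + Complex.exp (θ * Complex.I) • V p.2)) ?_ _ _
      exact hu.comp (f := fun q : (ℝ × ℝ) × ℝ =>
        (q.1.1, z + Complex.exp (q.2 * Complex.I) • V q.1.2)) (by fun_prop)
  have hsubset : Set.Ioi σ ×ˢ {s : ℝ | D s ≠ 0} ⊆ {p : ℝ × ℝ | 2 * π * uExt ω p.1 z ≤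
      ∫ θ in (0:ℝ)..(2 * π), uExt ω p.1 (z + Complex.exp (θ * Complex.I) • V p.2)} := by
    rintro ⟨σ', s⟩ ⟨hσ', hDs⟩
    refine uExt_submean_of_independent hω hs h hσ' z (V s) ?_
    simpa [hV] using hDs
  have hmem : (σ, (0 : ℝ)) ∈ closure (Set.Ioi σ ×ˢ {s : ℝ | D s ≠ 0}) := by
    rw [closure_prod_eq, closure_Ioi, hdense.closure_eq]
    exact ⟨Set.self_mem_Ici, Set.mem_univ _⟩
  have := hclosed.closure_subset_iff.2 hsubset hmem
  have hV0 : V 0 = v := by ext <;> simp [hV]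
  simpa only [Set.mem_ofPred_eq, hV0] using this

end Limit

/-- `Eω + σ|y|` is plurisubharmonic iff `T(Δω)(s,θ) + πσ ≥ 0` for all `s, θ`. -/
theorem psh_iff_xray (ω : ℝ × ℝ → ℝ) (hω : ContDiff ℝ (⊤ : ℕ∞) ω) (hsupp : HasCompactSupport ω)
    (σ : ℝ) :
    Psh (uExt ω σ) ↔ ∀ s θ : ℝ, 0 ≤ xray (lap ω) s θ + π * σ := by
  have h2 : ContDiff ℝ 2 ω := hω.of_le (WithTop.coe_le_coe.2 le_top)
  exact ⟨xray_lap_nonneg_of_psh h2 hsupp, psh_uExt_of_xray_lap_nonneg h2 hsupp⟩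

end
end
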